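/- Let f ∈ ℂ[x₁,…,x_{n+1}] be a strongly tame polynomial for the weights α and weighted degree d. Let J ⊆ ℂ[x] be the ℂ-linear span of all polynomials (∂f/∂xᵢ)·(∂h/∂xⱼ) − (∂f/∂xⱼ)·(∂h/∂xᵢ) with h ∈ ℂ[x], 1 ≤ i < j ≤ n+1, and let J_f := ⟨∂f/∂x₁,…,∂f/∂x_{n+1}⟩ be the Jacobian ideal. Then J ⊆ J_f, both J and J_f are stable under multiplication by f, and the classes of the polynomials e_β := x^β · Σ_{i=1}^{n+1} (αᵢ/d)·xᵢ·∂f/∂xᵢ, β ∈ I, form a basis of the quotient J_f/J as a free module over ℂ[t], with t acting as multiplication by f. (This is the statement that the forms η_β = x^β·Σᵢ(−1)^{i−1}(αᵢ/d)xᵢ d̂xᵢ, β ∈ I, freely generate the Brieskorn module H' = (df ∧ Ω^n)/(df ∧ dΩ^{n−1}) over ℂ[t]: identifying an (n+1)-form with its coefficient, df ∧ Ω^n corresponds to J_f and df ∧ η_β to e_β.) -/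

import Mathlib

open MvPolynomial

/-!
Identify `n`-forms with vector fields `ξ` and `(n + 1)`-forms with polynomials, so that `d` is the
divergence and `df ∧ ·` is `ξ ↦ ∇f ⬝ ξ`. The quotient of the `(n + 1)`-forms by `df ∧ dΩⁿ⁻¹` then
carries two operators: `t`, multiplication by `f`, and `σ : dη ↦ df ∧ η`, whose image is the
Brieskorn module `H'`. The Leibniz rule gives `t σ = σ (t + σ)`, so the assertion becomes that the
classes of the `x^β` are a `ℂ[U]`-basis of that quotient for `U = t + σ`, once `σ` is known to be
injective and since `e_β = λ_β σ [x^β]` with `λ_β ≠ 0` by Euler's identity.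

Filter by weight. Since `ℂ[x] / ⟨∂ᵢg⟩` is finite-dimensional, the `∂ᵢg` have exact Koszul complex,
which makes `σ` strict (hence injective) for this filtration and shifts weights by `d`. Euler's
identity again shows that on classes of weight at most `m` the operator `U` agrees with
`(1 + (Σ αᵢ + m) / d) σ` up to lower weight. The factor is nonzero, so `U` is as good as `σ` for
inductions on the weight, and modulo lower weight the cokernel of `σ` is `ℂ[x] / ⟨∂ᵢg⟩`, with basis
`x^β`.
-/

namespace Brieskorn

section Koszul

open scoped Matrix

variable {R : Type*} [CommRing R]

theorem exists_compAlternatingMap_eq {E M M' : Type*} [AddCommGroup E] [Module R E]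
    [Module.Free R E] [AddCommGroup M] [Module R M] [AddCommGroup M'] [Module R M'] {i : ℕ}
    (φ : M →ₗ[R] M') {y : E [⋀^Fin i]→ₗ[R] M'} (hy : ∀ v, y v ∈ LinearMap.range φ) :
    ∃ w : E [⋀^Fin i]→ₗ[R] M, φ.compAlternatingMap w = y := by
  obtain ⟨L, hL⟩ := Module.projective_lifting_property φ.rangeRestrict
    (exteriorPower.alternatingMapLinearEquiv (y.codRestrict _ hy)) φ.surjective_rangeRestrict
  refine ⟨L.compAlternatingMap (exteriorPower.ιMulti R i), AlternatingMap.ext fun v => ?_⟩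
  simpa using congrArg Subtype.val (LinearMap.congr_fun hL (exteriorPower.ιMulti R i v))

variable {E M : Type*} [AddCommGroup E] [Module R E] [AddCommGroup M] [Module R M] {i : ℕ}

/-- The exterior product `c ∧ x` of a linear form with an alternating form. -/
def wedge (c : E →ₗ[R] R) (x : E [⋀^Fin i]→ₗ[R] M) : E [⋀^Fin (i + 1)]→ₗ[R] M :=
  AlternatingMap.alternatizeUncurryFin (c.smulRight x)

@[simp]
theorem wedge_zero (c : E →ₗ[R] R) : wedge c (0 : E [⋀^Fin i]→ₗ[R] M) = 0 := by
  ext v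
  simp [wedge, AlternatingMap.alternatizeUncurryFin_apply]

theorem curryLeft_wedge (c : E →ₗ[R] R) (x : E [⋀^Fin (i + 1)]→ₗ[R] M) (G : E) :
    (wedge c x).curryLeft G = c G • x - wedge c (x.curryLeft G) := by
  ext v
  have removeNth_succ (k : Fin (i + 1)) :
      k.succ.removeNth (Matrix.vecCons G v) = Matrix.vecCons G (k.removeNth v) := by
    ext a
    cases a using Fin.cases <;> simp [Fin.removeNth, Matrix.vecCons]
  simp [wedge, AlternatingMap.alternatizeUncurryFin_apply, Fin.sum_univ_succ, removeNth_succ,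
    pow_succ, sub_eq_add_neg]

variable [Nontrivial R] [Module.Free R E] [Module.Finite R E]

theorem alternatingMap_eq_zero_of_finrank_lt (h : Module.finrank R E < i)
    (x : E [⋀^Fin i]→ₗ[R] M) : x = 0 := by
  refine (Module.finBasis R E).ext_alternating fun v hv => ?_
  simpa [h.not_ge] using Fintype.card_le_of_injective v hv

/-- Depth sensitivity of the Koszul complex, in the degrees `i + 1` with
`rank E ≤ i + length rs`. -/
theorem exists_curryLeft_eq_of_isWeaklyRegular {G : E} {rs : List R}
    (hrs : RingTheory.Sequence.IsWeaklyRegular M rs) (hG : ∀ r ∈ rs, ∃ c : E →ₗ[R] R, c G = r)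
    (hi : Module.finrank R E ≤ i + rs.length) {x : E [⋀^Fin (i + 1)]→ₗ[R] M}
    (hx : x.curryLeft G = 0) : ∃ z : E [⋀^Fin (i + 2)]→ₗ[R] M, z.curryLeft G = x := by
  induction rs generalizing M i with
  | nil => exact ⟨0, by simp [alternatingMap_eq_zero_of_finrank_lt (Nat.lt_succ_of_le hi) x]⟩
  | cons r rs ih =>
    obtain ⟨hr, hrs⟩ := (RingTheory.Sequence.isWeaklyRegular_cons_iff M r rs).1 hrs
    obtain ⟨c, rfl⟩ := hG r List.mem_cons_self
    have contract_wedge : (wedge c x).curryLeft G = c G • x := by simp [curryLeft_wedge, hx]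
    let π : M →ₗ[R] QuotSMulTop (c G) M := Submodule.mkQ _
    have cycle_mod : (π.compAlternatingMap (wedge c x)).curryLeft G = 0 := by
      ext v
      rw [AlternatingMap.curryLeft_compAlternatingMap, contract_wedge]
      exact (Submodule.Quotient.mk_eq_zero _).2 (Submodule.smul_mem_pointwise_smul _ _ _ trivial)
    obtain ⟨zbar, hzbar⟩ := ih hrs (fun s hs => hG s (List.mem_cons_of_mem _ hs))
      (by rw [List.length_cons] at hi; omega) cycle_mod
    obtain ⟨z, rfl⟩ := exists_compAlternatingMap_eq π (y := zbar)
      fun v => Submodule.mkQ_surjective _ _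
    obtain ⟨w, hw⟩ := exists_compAlternatingMap_eq (LinearMap.lsmul R M (c G))
      (y := wedge c x - z.curryLeft G) fun v => by
        have hmem := (Submodule.Quotient.eq _).1 congr($hzbar.symm v)
        obtain ⟨m, -, hm⟩ := Submodule.mem_smul_pointwise_iff_exists _ _ _ |>.1 hmem
        exact ⟨m, hm⟩
    refine ⟨w, AlternatingMap.ext fun v => hr ?_⟩
    calc c G • w.curryLeft G v
        = wedge c x (Matrix.vecCons G v) - (z.curryLeft G).curryLeft G v :=
          congr($hw (Matrix.vecCons G v))
      _ = c G • x v := by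
          rw [AlternatingMap.curryLeft_same, AlternatingMap.zero_apply, sub_zero]
          exact congr($contract_wedge v)

theorem exists_skew_mulVec_eq_of_isWeaklyRegular {ι : Type*} [Fintype ι] {F : ι → R}
    {rs : List R} (hrs : RingTheory.Sequence.IsWeaklyRegular R rs)
    (hF : ∀ r ∈ rs, r ∈ Ideal.span (Set.range F)) (hlength : Fintype.card ι ≤ rs.length)
    {ξ : ι → R} (hξ : F ⬝ᵥ ξ = 0) : ∃ θ : Matrix ι ι R, θᵀ = -θ ∧ θ *ᵥ F = ξ := by
  classical
  let x : (ι → R) [⋀^Fin 1]→ₗ[R] R :=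
    AlternatingMap.ofSubsingleton R (ι → R) R 0 (Fintype.linearCombination R ξ)
  have hF' : ∀ r ∈ rs, ∃ c : (ι → R) →ₗ[R] R, c F = r := fun r hr => by
    obtain ⟨c, hc⟩ := Ideal.mem_span_range_iff_exists_fun.1 (hF r hr)
    exact ⟨Fintype.linearCombination R c, by
      simpa [Fintype.linearCombination_apply, mul_comm] using hc⟩
  have hx : x.curryLeft F = 0 := by
    ext v
    simpa [x, Fintype.linearCombination_apply, dotProduct] using hξ
  obtain ⟨z, hz⟩ := exists_curryLeft_eq_of_isWeaklyRegular (i := 0) hrs hF' (by simpa) hx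
  refine ⟨Matrix.of fun i j => z ![Pi.single j 1, Pi.single i 1], ?_, ?_⟩
  · ext i j
    have := z.map_swap ![Pi.single j 1, Pi.single i 1] zero_ne_one
    simp_all
  · funext i
    have update_zero (a : ι → R) :
        Function.update ![0, Pi.single i 1] 0 a = ![a, Pi.single i 1] :=
      Fin.update_cons_zero _ _ _
    have expand := z.map_update_sum Finset.univ 0 (fun j => F j • Pi.single j 1)
      ![0, Pi.single i 1]
    simp_rw [z.map_update_smul, update_zero, ← pi_eq_sum_univ' F] at expand
    calc ∑ j, z ![Pi.single j 1, Pi.single i 1] * F j = z.curryLeft F ![Pi.single i 1] := by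
          simpa [mul_comm] using expand.symm
      _ = ξ i := by simp [hz, x, Fintype.linearCombination_apply, Pi.single_apply]

end Koszul

section RegularSequence

open scoped Matrix

variable {R ι : Type*} [CommRing R]

theorem mem_map_C_of_monic_mul_mem {I : Ideal R} {p q : Polynomial R} (hp : p.Monic)
    (h : p * q ∈ I.map Polynomial.C) : q ∈ I.map Polynomial.C := by
  have mem_iff (r : Polynomial R) :
      r ∈ I.map Polynomial.C ↔ r.map (Ideal.Quotient.mk I) = 0 := by
    simp [Ideal.mem_map_C_iff, Polynomial.ext_iff, Ideal.Quotient.eq_zero_iff_mem]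
  rw [mem_iff, Polynomial.map_mul] at h
  rwa [mem_iff, ← (hp.map _).mul_right_eq_zero_iff]

theorem mem_span_of_aeval_X_mul_mem {p : ι → Polynomial R} {s : Set ι} {j : ι}
    (hp : (p j).Monic) (hj : j ∉ s) {q : MvPolynomial ι R}
    (h : Polynomial.aeval (X j) (p j) * q ∈
      Ideal.span ((fun i => Polynomial.aeval (X i : MvPolynomial ι R) (p i)) '' s)) :
    q ∈ Ideal.span ((fun i => Polynomial.aeval (X i : MvPolynomial ι R) (p i)) '' s) := by
  classical
  set I := Ideal.span ((fun i => Polynomial.aeval (X i : MvPolynomial ι R) (p i)) '' s)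
  let φ : MvPolynomial ι R →ₐ[R] Polynomial (MvPolynomial ι R) :=
    aeval (Function.update (fun i => Polynomial.C (X i)) j Polynomial.X)
  have eval_φ (q) : (φ q).eval (X j) = q := by
    have : ((Polynomial.aeval (X j)).restrictScalars R).comp φ = AlgHom.id R _ := by
      ext i
      obtain rfl | hi := eq_or_ne i j <;> simp [φ, *]
    exact DFunLike.congr_fun this q
  have φ_j : φ (Polynomial.aeval (X j) (p j)) = (p j).map (algebraMap R _) := by
    rw [← Polynomial.aeval_algHom_apply]
    simp [φ, Polynomial.aeval_X_left_eq_map]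
  have φ_mem : I ≤ (I.map Polynomial.C).comap φ := by
    refine Ideal.span_le.2 ?_
    rintro _ ⟨i, hi, rfl⟩
    have φ_i : φ (Polynomial.aeval (X i) (p i)) =
        Polynomial.CAlgHom (R := R) (Polynomial.aeval (X i) (p i)) := by
      rw [← Polynomial.aeval_algHom_apply, ← Polynomial.aeval_algHom_apply]
      simp [φ, ne_of_mem_of_not_mem hi hj]
    rw [SetLike.mem_coe, Ideal.mem_comap, φ_i]
    exact Ideal.mem_map_of_mem _ (Ideal.subset_span ⟨i, hi, rfl⟩)
  have hφq : φ q ∈ I.map Polynomial.C := by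
    refine mem_map_C_of_monic_mul_mem (hp.map (algebraMap R _)) ?_
    rw [← φ_j, ← map_mul]
    exact φ_mem h
  have : I.map Polynomial.C ≤ I.comap (Polynomial.evalRingHom (X j)) :=
    Ideal.map_le_iff_le_comap.2 fun r hr => by simpa
  simpa [eval_φ] using this hφq

theorem isWeaklyRegular_map_aeval_X {p : ι → Polynomial R} (hp : ∀ i, (p i).Monic) {l : List ι}
    (hl : l.Nodup) : RingTheory.Sequence.IsWeaklyRegular (MvPolynomial ι R)
      (l.map fun i => Polynomial.aeval (X i : MvPolynomial ι R) (p i)) := by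
  refine ⟨fun k hk => (isSMulRegular_quotient_iff_mem_of_smul_mem _ _).2 fun q hq => ?_⟩
  have hk' : k < l.length := by simpa using hk
  have not_mem : l[k] ∉ {i | i ∈ l.take k} := by
    simp [List.mem_take_iff_getElem, hl.getElem_inj_iff]
  have ofList_eq :
      Ideal.ofList ((l.map fun i => Polynomial.aeval (X i : MvPolynomial ι R) (p i)).take k) =
        Ideal.span ((fun i => Polynomial.aeval (X i : MvPolynomial ι R) (p i)) ''
          {i | i ∈ l.take k}) := by
    simp [← List.map_take, Ideal.ofList, Set.image]
  have := mem_span_of_aeval_X_mul_mem (hp l[k]) not_mem (q := q)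
  simp_all

theorem exists_skew_mulVec_eq_of_finite {K : Type*} [Field K] [Fintype ι]
    {F : ι → MvPolynomial ι K} [Module.Finite K (MvPolynomial ι K ⧸ Ideal.span (Set.range F))]
    {ξ : ι → MvPolynomial ι K} (hξ : F ⬝ᵥ ξ = 0) :
    ∃ θ : Matrix ι ι (MvPolynomial ι K), θᵀ = -θ ∧ θ *ᵥ F = ξ := by
  have (j : ι) : ∃ p : Polynomial K, p.Monic ∧
      Polynomial.aeval (X j) p ∈ Ideal.span (Set.range F) := by
    obtain ⟨p, hp, hp0⟩ := Algebra.IsIntegral.isIntegral (R := K)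
      (Ideal.Quotient.mkₐ K (Ideal.span (Set.range F)) (X j))
    refine ⟨p, hp, ?_⟩
    rwa [← Polynomial.aeval_def, Polynomial.aeval_algHom_apply, Ideal.Quotient.mkₐ_eq_mk,
      Ideal.Quotient.eq_zero_iff_mem] at hp0
  choose p hp hpF using this
  exact exists_skew_mulVec_eq_of_isWeaklyRegular
    (isWeaklyRegular_map_aeval_X hp Finset.univ.nodup_toList) (by simpa using hpF) (by simp) hξ

end RegularSequence

section WeightFiltration

variable {R ι : Type*} [CommRing R] (w : ι → ℤ)

/-- The polynomials all of whose monomials have weight at most `m`. -/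
noncomputable def weightLE (m : ℤ) : Submodule R (MvPolynomial ι R) :=
  restrictSupport R {β | Finsupp.weight w β ≤ m}

variable {w} {m n : ℤ} {p q : MvPolynomial ι R}

theorem mem_weightLE_iff :
    p ∈ weightLE w m ↔ ∀ β, m < Finsupp.weight w β → coeff β p = 0 := by
  simp only [weightLE, mem_restrictSupport_iff, Set.subset_def, Finset.mem_coe, mem_support_iff]
  exact forall_congr' fun β => not_imp_comm.trans <| by simp

theorem weightLE_mono (h : m ≤ n) : weightLE (R := R) w m ≤ weightLE w n :=
  restrictSupport_mono R fun _ hβ => le_trans hβ h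

theorem mul_mem_weightLE (hp : p ∈ weightLE w m) (hq : q ∈ weightLE w n) :
    p * q ∈ weightLE w (m + n) := by
  have := Submodule.mul_mem_mul hp hq
  rw [weightLE, weightLE, ← restrictSupport_add] at this
  refine restrictSupport_mono R (Set.add_subset_iff.2 fun β hβ γ hγ => ?_) this
  simpa using add_le_add hβ hγ

theorem pderiv_mem_weightLE (hp : p ∈ weightLE w m) (i : ι) :
    pderiv i p ∈ weightLE w (m - w i) := by
  rw [mem_weightLE_iff] at hp ⊢
  intro β hβ
  rw [coeff_pderiv, hp _ (by simpa [Finsupp.weight_single] using sub_lt_iff_lt_add.1 hβ), zero_mul]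

theorem mem_weightLE_of_isWeightedHomogeneous (hp : IsWeightedHomogeneous w p m) :
    p ∈ weightLE w m :=
  fun _ hβ => (hp (mem_support_iff.1 hβ)).le

theorem weightLE_eq_bot (hw : ∀ i, 0 ≤ w i) (hm : m < 0) :
    weightLE (R := R) w m = ⊥ := by
  refine (Submodule.eq_bot_iff _).2 fun p hp => MvPolynomial.ext _ _ fun β => ?_
  refine mem_weightLE_iff.1 hp β (hm.trans_le ?_)
  rw [Finsupp.weight_apply]
  exact Finset.sum_nonneg fun i _ => nsmul_nonneg (hw i) _

theorem exists_mem_weightLE (w : ι → ℤ) (p : MvPolynomial ι R) : ∃ k : ℕ, p ∈ weightLE w k := by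
  obtain ⟨m, hm⟩ := (p.support.image (Finsupp.weight w)).bddAbove
  refine ⟨m.toNat, fun β hβ => ?_⟩
  exact (hm (Finset.mem_coe.2 (Finset.mem_image_of_mem _ hβ))).trans m.self_le_toNat

theorem weightedHomogeneousComponent_eq_zero_of_mem_weightLE (hp : p ∈ weightLE w m) (hmn : m < n) :
    weightedHomogeneousComponent w n p = 0 := by
  ext β
  rw [coeff_weightedHomogeneousComponent]
  split_ifs with hβ
  · exact mem_weightLE_iff.1 hp β (hβ ▸ hmn)
  · simp

theorem sub_weightedHomogeneousComponent_mem_weightLE (hp : p ∈ weightLE w m) :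
    p - weightedHomogeneousComponent w m p ∈ weightLE w (m - 1) := by
  rw [mem_weightLE_iff] at hp ⊢
  intro β hβ
  rw [coeff_sub, coeff_weightedHomogeneousComponent]
  split_ifs with h
  · simp
  · rw [hp β (by omega), sub_zero]

theorem weightedHomogeneousComponent_pderiv (m : ℤ) (i : ι) (p : MvPolynomial ι R) :
    weightedHomogeneousComponent w m (pderiv i p) =
      pderiv i (weightedHomogeneousComponent w (m + w i) p) := by
  ext β
  simp [coeff_weightedHomogeneousComponent, coeff_pderiv, Finsupp.weight_single]

theorem weightedHomogeneousComponent_mul (hp : IsWeightedHomogeneous w p m) (n : ℤ)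
    (q : MvPolynomial ι R) : weightedHomogeneousComponent w (m + n) (p * q) =
      p * weightedHomogeneousComponent w n q := by
  classical
  let := weightedGradedAlgebra R w
  simpa only [DirectSum.decompose, Equiv.coe_fn_mk, weightedDecomposition.decompose'_apply] using
    DirectSum.coe_decompose_mul_add_of_left_mem (weightedHomogeneousSubmodule R w)
      (j := n) (b := q) hp

theorem weight_natCast (α : ι → ℕ) (β : ι →₀ ℕ) :
    Finsupp.weight (fun i => (α i : ℤ)) β = (Finsupp.weight α β : ℤ) := by
  simp [Finsupp.weight_apply, Finsupp.sum]

theorem isWeightedHomogeneous_natCast_iff {α : ι → ℕ} {k : ℕ} :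
    IsWeightedHomogeneous (fun i => (α i : ℤ)) p k ↔ IsWeightedHomogeneous α p k := by
  simp [IsWeightedHomogeneous, weight_natCast]

theorem weightedHomogeneousComponent_natCast (α : ι → ℕ) (k : ℕ) (p : MvPolynomial ι R) :
    weightedHomogeneousComponent (fun i => (α i : ℤ)) k p = weightedHomogeneousComponent α k p := by
  ext β
  simp [coeff_weightedHomogeneousComponent, weight_natCast]

variable (w m) in
/-- The vector fields `∑ i, ξ i ∂/∂xᵢ` of weight at most `m`, where `∂/∂xᵢ` has weight `-w i`. -/
noncomputable def vectorWeightLE : Submodule R (ι → MvPolynomial ι R) :=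
  Submodule.pi Set.univ fun i => weightLE w (m + w i)

variable (w m) in
/-- The component of weight `m` of a vector field, where `∂/∂xᵢ` has weight `-w i`. -/
noncomputable def vectorComponent (ξ : ι → MvPolynomial ι R) (i : ι) : MvPolynomial ι R :=
  weightedHomogeneousComponent w (m + w i) (ξ i)

variable {ξ : ι → MvPolynomial ι R}

theorem mem_vectorWeightLE_iff : ξ ∈ vectorWeightLE w m ↔ ∀ i, ξ i ∈ weightLE w (m + w i) := by
  simp [vectorWeightLE]

theorem isWeightedHomogeneous_vectorComponent (i : ι) :
    IsWeightedHomogeneous w (vectorComponent w m ξ i) (m + w i) :=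
  weightedHomogeneousComponent_isWeightedHomogeneous _ _

theorem sub_vectorComponent_mem_vectorWeightLE (hξ : ξ ∈ vectorWeightLE w m) :
    ξ - vectorComponent w m ξ ∈ vectorWeightLE w (m - 1) := by
  rw [mem_vectorWeightLE_iff] at hξ ⊢
  intro i
  rw [sub_add_eq_add_sub]
  exact sub_weightedHomogeneousComponent_mem_weightLE (hξ i)

theorem vectorComponent_mem_vectorWeightLE : vectorComponent w m ξ ∈ vectorWeightLE w m :=
  mem_vectorWeightLE_iff.2 fun i =>
    mem_weightLE_of_isWeightedHomogeneous (isWeightedHomogeneous_vectorComponent i)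

theorem exists_mem_vectorWeightLE [Finite ι] (hw : ∀ i, 0 ≤ w i) (m : ℤ)
    (ξ : ι → MvPolynomial ι R) : ∃ k : ℕ, ξ ∈ vectorWeightLE w (m + k) := by
  choose k hk using fun i => exists_mem_weightLE w (ξ i)
  obtain ⟨K, hK⟩ := (Set.finite_range k).bddAbove
  refine ⟨(K - m).toNat, mem_vectorWeightLE_iff.2 fun i => weightLE_mono ?_ (hk i)⟩
  have := hK ⟨i, rfl⟩
  have := hw i
  omega

end WeightFiltration

section VectorCalculus

open Matrix

variable {R ι : Type*} [CommRing R]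

theorem pderiv_comm (i j : ι) (p : MvPolynomial ι R) :
    pderiv i (pderiv j p) = pderiv j (pderiv i p) := by
  classical
  have : ⁅pderiv (R := R) i, pderiv (R := R) j⁆ = 0 := by
    refine MvPolynomial.derivation_ext fun k => ?_
    simp [Derivation.commutator_apply, pderiv_X, Pi.single_apply, apply_ite (pderiv (R := R) _)]
  simpa [Derivation.commutator_apply, sub_eq_zero] using DFunLike.congr_fun this p

/-- The gradient of a polynomial. -/
noncomputable def gradient (p : MvPolynomial ι R) (i : ι) : MvPolynomial ι R := pderiv i p

theorem gradient_sub (p q : MvPolynomial ι R) : gradient (p - q) = gradient p - gradient q :=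
  funext fun _ => map_sub _ p q

/-- The vector field `∑ i, α i xᵢ ∂/∂xᵢ`, which multiplies the polynomials of weight `m` by `m`. -/
noncomputable def eulerField (α : ι → ℕ) (i : ι) : MvPolynomial ι R := α i • X i

/-- The bivector field `ξ ∧ ζ`. -/
noncomputable def bivector (ξ ζ : ι → MvPolynomial ι R) : Matrix ι ι (MvPolynomial ι R) :=
  vecMulVec ξ ζ - vecMulVec ζ ξ

theorem transpose_bivector (ξ ζ : ι → MvPolynomial ι R) : (bivector ξ ζ)ᵀ = -bivector ξ ζ := by
  simp [bivector, transpose_vecMulVec]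

theorem skew_apply {θ : Matrix ι ι R} (hθ : θᵀ = -θ) (i j : ι) : θ j i = -θ i j :=
  congr($hθ i j)

variable [Fintype ι]

/-- The divergence of a polynomial vector field. -/
noncomputable def divergence : (ι → MvPolynomial ι R) →ₗ[R] MvPolynomial ι R :=
  ∑ i, (pderiv i).toLinearMap ∘ₗ LinearMap.proj i

theorem divergence_apply (ξ : ι → MvPolynomial ι R) : divergence ξ = ∑ i, pderiv i (ξ i) := by
  simp [divergence]

theorem divergence_smul (p : MvPolynomial ι R) (ξ : ι → MvPolynomial ι R) :
    divergence (p • ξ) = p * divergence ξ + gradient p ⬝ᵥ ξ := by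
  simp [divergence_apply, dotProduct, gradient, Finset.sum_add_distrib, Finset.mul_sum, mul_comm]

theorem divergence_vectorComponent (w : ι → ℤ) (m : ℤ) (ξ : ι → MvPolynomial ι R) :
    divergence (vectorComponent w m ξ) = weightedHomogeneousComponent w m (divergence ξ) := by
  simp [divergence_apply, vectorComponent, weightedHomogeneousComponent_pderiv]

/-- The vector field formed by the divergences of the rows of a matrix: the codifferential of a
bivector field when the matrix is skew-symmetric. -/
noncomputable def rowDivergence (θ : Matrix ι ι (MvPolynomial ι R)) (i : ι) : MvPolynomial ι R :=
  divergence (θ i)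

theorem rowDivergence_add (θ θ' : Matrix ι ι (MvPolynomial ι R)) :
    rowDivergence (θ + θ') = rowDivergence θ + rowDivergence θ' :=
  funext fun i => map_add divergence (θ i) (θ' i)

theorem rowDivergence_smul (c : R) (θ : Matrix ι ι (MvPolynomial ι R)) :
    rowDivergence (c • θ) = c • rowDivergence θ :=
  funext fun i => map_smul divergence c (θ i)

theorem gradient_dotProduct_eulerField {α : ι → ℕ} {p : MvPolynomial ι R} {m : ℤ}
    (hp : IsWeightedHomogeneous (fun i => (α i : ℤ)) p m) :
    gradient p ⬝ᵥ eulerField α = m • p := by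
  obtain rfl | hp0 := eq_or_ne p 0
  · simp [gradient, dotProduct]
  obtain ⟨β, hβ⟩ := ne_zero_iff.1 hp0
  obtain rfl := hp hβ
  rw [weight_natCast] at hp ⊢
  rw [natCast_zsmul, ← (isWeightedHomogeneous_natCast_iff.1 hp).sum_weight_X_mul_pderiv]
  simp only [dotProduct, gradient, eulerField, smul_mul_assoc, mul_comm]

omit [Fintype ι] in
theorem smul_eulerField_mem_vectorWeightLE {w : ι → ℤ} {α : ι → ℕ} {p : MvPolynomial ι R} {m : ℤ}
    (hp : p ∈ weightLE w m) :
    p • (eulerField α : ι → MvPolynomial ι R) ∈ vectorWeightLE w m :=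
  mem_vectorWeightLE_iff.2 fun i => mul_mem_weightLE hp <| Submodule.smul_of_tower_mem _ _ <|
    mem_weightLE_of_isWeightedHomogeneous (isWeightedHomogeneous_X R w i)

theorem divergence_eulerField (α : ι → ℕ) :
    divergence (eulerField α : ι → MvPolynomial ι R) = ∑ i, (α i : MvPolynomial ι R) := by
  simp [divergence_apply, eulerField]

theorem divergence_smul_eulerField {α : ι → ℕ} {p : MvPolynomial ι R} {m : ℤ}
    (hp : IsWeightedHomogeneous (fun i => (α i : ℤ)) p m) :
    divergence (p • eulerField α) = (∑ i, (α i : ℤ) + m) • p := by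
  rw [divergence_smul, gradient_dotProduct_eulerField hp, divergence_eulerField, add_smul]
  simp [mul_comm]

theorem gradient_dotProduct_eulerField_sub_mem_weightLE {α : ι → ℕ} {p : MvPolynomial ι R} {m : ℤ}
    (hp : p ∈ weightLE (fun i => (α i : ℤ)) m) :
    gradient p ⬝ᵥ eulerField α - m • p ∈ weightLE (fun i => (α i : ℤ)) (m - 1) := by
  set q := p - weightedHomogeneousComponent (fun i => (α i : ℤ)) m p with hq
  have hqm : q ∈ weightLE (fun i => (α i : ℤ)) (m - 1) :=
    sub_weightedHomogeneousComponent_mem_weightLE hp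
  have eq_lower : gradient p ⬝ᵥ eulerField α - m • p = gradient q ⬝ᵥ eulerField α - m • q := by
    rw [hq, gradient_sub, sub_dotProduct, gradient_dotProduct_eulerField
      (weightedHomogeneousComponent_isWeightedHomogeneous m p), smul_sub, sub_sub_sub_cancel_right]
  rw [eq_lower]
  refine sub_mem (sum_mem fun i _ => ?_) (Submodule.smul_of_tower_mem _ m hqm)
  have euler_mem : (eulerField α i : MvPolynomial ι R) ∈ weightLE (fun i => (α i : ℤ)) (α i) :=
    Submodule.smul_of_tower_mem _ _ (mem_weightLE_of_isWeightedHomogeneous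
      (isWeightedHomogeneous_X R (fun i => (α i : ℤ)) i))
  have := mul_mem_weightLE (pderiv_mem_weightLE hqm i) euler_mem
  rwa [sub_add_cancel] at this

theorem rowDivergence_bivector_eulerField {α : ι → ℕ} {ξ : ι → MvPolynomial ι R} {m : ℤ}
    (hξ : ∀ i, IsWeightedHomogeneous (fun i => (α i : ℤ)) (ξ i) (m + α i)) :
    rowDivergence (bivector ξ (eulerField α)) =
      (∑ i, (α i : ℤ) + m) • ξ - divergence ξ • eulerField α := by
  classical
  funext i
  have row : bivector ξ (eulerField α) i =
      ξ i • eulerField α - (eulerField α i : MvPolynomial ι R) • ξ := by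
    ext1 j
    simp [bivector, vecMulVec_apply]
  have gradient_eulerField : gradient (eulerField α i) ⬝ᵥ ξ = (α i : ℤ) • ξ i := by
    rw [dotProduct, Finset.sum_eq_single i]
    · simp [gradient, eulerField]
    · simp +contextual [gradient, eulerField]
    · simp
  rw [rowDivergence, row, map_sub, divergence_smul_eulerField (hξ i), divergence_smul,
    gradient_eulerField]
  simp only [Pi.sub_apply, Pi.smul_apply, smul_eq_mul]
  simp only [zsmul_eq_mul]
  push_cast
  ring

theorem sum_sum_eq_zero_of_skew {M : Type*} [AddCommGroup M] [IsAddTorsionFree M]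
    {a : ι → ι → M} (ha : ∀ i j, a j i = -a i j) : ∑ i, ∑ j, a i j = 0 := by
  refine self_eq_neg.1 ?_
  rw [← Finset.sum_neg_distrib, Finset.sum_comm]
  exact Finset.sum_congr rfl fun j _ => by rw [← Finset.sum_neg_distrib]; simp only [ha j]

theorem dotProduct_mulVec_self_of_skew [IsAddTorsionFree R] {θ : Matrix ι ι R} (hθ : θᵀ = -θ)
    (ξ : ι → R) : ξ ⬝ᵥ θ *ᵥ ξ = 0 := by
  simp only [dotProduct, mulVec, Finset.mul_sum]
  refine sum_sum_eq_zero_of_skew fun i j => ?_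
  rw [skew_apply hθ i j]
  ring

variable {K : Type*} [Field K] [CharZero K]

theorem divergence_mulVec_gradient {θ : Matrix ι ι (MvPolynomial ι K)} (hθ : θᵀ = -θ)
    (p : MvPolynomial ι K) :
    divergence (θ *ᵥ gradient p) = -(gradient p ⬝ᵥ rowDivergence θ) := by
  have hessian : ∑ i, ∑ j, θ i j * pderiv i (pderiv j p) = 0 :=
    sum_sum_eq_zero_of_skew fun i j => by rw [skew_apply hθ i j, pderiv_comm, neg_mul]
  calc divergence (θ *ᵥ gradient p)
      = ∑ i, ∑ j, θ i j * pderiv i (pderiv j p) + ∑ i, ∑ j, pderiv j p * pderiv i (θ i j) := by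
        simp [divergence_apply, mulVec, dotProduct, gradient, Finset.sum_add_distrib]
    _ = -(gradient p ⬝ᵥ rowDivergence θ) := by
        rw [hessian, zero_add, Finset.sum_comm]
        simp only [dotProduct, rowDivergence, divergence_apply, gradient, Finset.mul_sum,
          ← Finset.sum_neg_distrib]
        exact Finset.sum_congr rfl fun j _ => Finset.sum_congr rfl fun i _ => by
          rw [skew_apply hθ j i, map_neg, mul_neg]

theorem weightLE_le_map_divergence [Nonempty ι] (w : ι → ℤ) (m : ℤ) :
    weightLE (R := K) w m ≤ (vectorWeightLE w m).map divergence := by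
  intro p hp
  rw [p.as_sum]
  refine sum_mem fun β hβ => ?_
  have monomial_mem : monomial β (coeff β p) ∈ weightLE w m :=
    weightLE_mono (hp hβ) (mem_weightLE_of_isWeightedHomogeneous
      (isWeightedHomogeneous_monomial w β _ rfl))
  have smul_mem := Submodule.mem_map_of_mem (f := divergence)
    (smul_eulerField_mem_vectorWeightLE (α := 1) monomial_mem)
  rw [divergence_smul_eulerField (isWeightedHomogeneous_monomial _ β _ rfl), weight_natCast,
    ← Int.cast_smul_eq_zsmul K] at smul_mem
  refine (Submodule.smul_mem_iff _ (Int.cast_ne_zero.2 ?_)).1 smul_mem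
  have := Fintype.card_pos (α := ι)
  simp only [Pi.one_apply, Nat.cast_one, Finset.sum_const, Finset.card_univ, nsmul_eq_mul, mul_one]
  omega

theorem divergence_surjective [Nonempty ι] :
    Function.Surjective (divergence : (ι → MvPolynomial ι K) → MvPolynomial ι K) := fun p => by
  obtain ⟨k, hk⟩ := exists_mem_weightLE 0 p
  obtain ⟨ξ, -, hξ⟩ := weightLE_le_map_divergence 0 k hk
  exact ⟨ξ, hξ⟩

/-- A linear choice of a vector field with given divergence. -/
noncomputable def divergenceSection [Nonempty ι] :
    MvPolynomial ι K →ₗ[K] ι → MvPolynomial ι K :=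
  (divergence.exists_rightInverse_of_surjective
    (LinearMap.range_eq_top.2 divergence_surjective)).choose

theorem divergence_divergenceSection [Nonempty ι] (p : MvPolynomial ι K) :
    divergence (divergenceSection p) = p :=
  LinearMap.congr_fun (divergence.exists_rightInverse_of_surjective
    (LinearMap.range_eq_top.2 divergence_surjective)).choose_spec p

/-- The Poincaré lemma in degree `card ι - 1`. -/
theorem exists_rowDivergence_eq [Nontrivial ι] {ξ : ι → MvPolynomial ι K}
    (hξ : divergence ξ = 0) :
    ∃ θ : Matrix ι ι (MvPolynomial ι K), θᵀ = -θ ∧ rowDivergence θ = ξ := by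
  let w (i : ι) : ℤ := ((1 : ι → ℕ) i : ℕ)
  obtain ⟨k, hk⟩ := exists_mem_vectorWeightLE (w := w) (fun _ => zero_le_one) (-2) ξ
  induction k generalizing ξ with
  | zero =>
    refine ⟨0, by simp, funext fun i => ?_⟩
    have : weightLE (R := K) w (-2 + w i) = ⊥ :=
      weightLE_eq_bot (fun _ => zero_le_one) (by simp [w])
    have hξi : ξ i = 0 := by simpa [this] using mem_vectorWeightLE_iff.1 hk i
    exact (map_zero divergence).trans hξi.symm
  | succ k ih =>
    obtain ⟨m, hm⟩ : ∃ m : ℤ, m = -2 + (k + 1 : ℕ) := ⟨_, rfl⟩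
    rw [← hm] at hk
    have hζ : divergence (vectorComponent w m ξ) = 0 := by
      rw [divergence_vectorComponent, hξ, map_zero]
    obtain ⟨θ, hθ, hθξ⟩ := ih (ξ := ξ - vectorComponent w m ξ) (by rw [map_sub, hξ, hζ, sub_zero])
      (by simpa [hm, add_sub_assoc] using sub_vectorComponent_mem_vectorWeightLE hk)
    have contract : rowDivergence (bivector (vectorComponent w m ξ) (eulerField 1)) =
        ((∑ i, w i + m : ℤ) : K) • vectorComponent w m ξ := by
      rw [rowDivergence_bivector_eulerField isWeightedHomogeneous_vectorComponent, hζ, zero_smul,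
        sub_zero, Int.cast_smul_eq_zsmul]
    have hm0 : ((∑ i, w i + m : ℤ) : K) ≠ 0 := by
      have := Fintype.one_lt_card (α := ι)
      simp only [ne_eq, Int.cast_eq_zero, w, Pi.one_apply, Nat.cast_one, Finset.sum_const,
        Finset.card_univ, nsmul_eq_mul, mul_one]
      omega
    refine ⟨θ + ((∑ i, w i + m : ℤ) : K)⁻¹ • bivector (vectorComponent w m ξ) (eulerField 1),
      ?_, ?_⟩
    · rw [transpose_add, transpose_smul, hθ, transpose_bivector, smul_neg, ← neg_add]
    · rw [rowDivergence_add, rowDivergence_smul, contract, hθξ, inv_smul_smul₀ hm0,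
        sub_add_cancel]

end VectorCalculus

section JacobianBrackets

open Matrix

/-- The span of the coefficients `∂f/∂xᵢ ∂h/∂xⱼ - ∂f/∂xⱼ ∂h/∂xᵢ` of the forms `df ∧ dh`. It
corresponds to `df ∧ dΩⁿ⁻¹` when `(n + 1)`-forms are identified with their coefficients. -/
noncomputable def jacobianBrackets {R ι : Type*} [CommRing R] (f : MvPolynomial ι R) :
    Submodule R (MvPolynomial ι R) :=
  Submodule.span R {P | ∃ (h : MvPolynomial ι R) (i j : ι),
    P = pderiv i f * pderiv j h - pderiv j f * pderiv i h}

theorem jacobianBrackets_eq_span_lt {R ι : Type*} [CommRing R] [LinearOrder ι]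
    (f : MvPolynomial ι R) : jacobianBrackets f =
      Submodule.span R {P | ∃ (h : MvPolynomial ι R) (i j : ι), i < j ∧
        P = pderiv i f * pderiv j h - pderiv j f * pderiv i h} := by
  refine le_antisymm (Submodule.span_le.2 ?_) (Submodule.span_mono ?_)
  · rintro _ ⟨h, i, j, rfl⟩
    obtain hij | rfl | hij := lt_trichotomy i j
    · exact Submodule.subset_span ⟨h, i, j, hij, rfl⟩
    · simp
    · rw [← neg_sub]
      exact neg_mem (Submodule.subset_span ⟨h, j, i, hij, rfl⟩)
  · rintro _ ⟨h, i, j, -, rfl⟩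
    exact ⟨h, i, j, rfl⟩

theorem jacobianBrackets_le {R ι : Type*} [CommRing R] (f : MvPolynomial ι R) :
    jacobianBrackets f ≤ (Ideal.span (Set.range (gradient f))).restrictScalars R := by
  refine Submodule.span_le.2 ?_
  rintro _ ⟨h, i, j, rfl⟩
  have pderiv_mem (k : ι) : pderiv k f ∈ Ideal.span (Set.range (gradient f)) :=
    Ideal.subset_span ⟨k, rfl⟩
  exact sub_mem (Ideal.mul_mem_right _ _ (pderiv_mem i)) (Ideal.mul_mem_right _ _ (pderiv_mem j))

variable {K ι : Type*} [Field K] [CharZero K] [Fintype ι] {f p : MvPolynomial ι K}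
  {ξ : ι → MvPolynomial ι K}

theorem gradient_dotProduct_rowDivergence_mem_jacobianBrackets
    {θ : Matrix ι ι (MvPolynomial ι K)} (hθ : θᵀ = -θ) :
    gradient f ⬝ᵥ rowDivergence θ ∈ jacobianBrackets f := by
  have two_smul_eq : (2 : K) • (gradient f ⬝ᵥ rowDivergence θ) =
      ∑ i, ∑ j, (pderiv i f * pderiv j (θ i j) - pderiv j f * pderiv i (θ i j)) := by
    simp only [dotProduct, rowDivergence, divergence_apply, gradient, Finset.mul_sum,
      Finset.smul_sum]
    simp only [← sub_eq_zero (b := ∑ _, _), ← Finset.sum_sub_distrib]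
    refine sum_sum_eq_zero_of_skew fun i j => ?_
    simp only [skew_apply hθ i j, two_smul, map_neg]
    ring
  refine (Submodule.smul_mem_iff _ (two_ne_zero (α := K))).1 ?_
  rw [two_smul_eq]
  exact sum_mem fun i _ => sum_mem fun j _ => Submodule.subset_span ⟨θ i j, i, j, rfl⟩

theorem mem_jacobianBrackets_iff [Nontrivial ι] :
    p ∈ jacobianBrackets f ↔ ∃ η, divergence η = 0 ∧ gradient f ⬝ᵥ η = p := by
  classical
  constructor
  · intro hp
    induction hp using Submodule.span_induction with
    | mem p hp =>
      obtain ⟨h, i, j, rfl⟩ := hp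
      refine ⟨Pi.single i (pderiv j h) - Pi.single j (pderiv i h), ?_, ?_⟩
      · have divergence_single (k : ι) (q : MvPolynomial ι K) :
            divergence (Pi.single k q) = pderiv k q := by
          simp [divergence_apply, Pi.single_apply, apply_ite (pderiv (R := K) _)]
        rw [map_sub, divergence_single, divergence_single, pderiv_comm, sub_self]
      · simp [dotProduct_sub, dotProduct_single, gradient]
    | zero => exact ⟨0, by simp⟩
    | add p q _ _ hp hq =>
      obtain ⟨η, hη, rfl⟩ := hp
      obtain ⟨η', hη', rfl⟩ := hq
      exact ⟨η + η', by rw [map_add, hη, hη', add_zero], dotProduct_add ..⟩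
    | smul c p _ hp =>
      obtain ⟨η, hη, rfl⟩ := hp
      exact ⟨c • η, by rw [map_smul, hη, smul_zero], dotProduct_smul ..⟩
  · rintro ⟨η, hη, rfl⟩
    obtain ⟨θ, hθ, rfl⟩ := exists_rowDivergence_eq hη
    exact gradient_dotProduct_rowDivergence_mem_jacobianBrackets hθ

variable [Nontrivial ι]

theorem gradient_dotProduct_mem_jacobianBrackets (hξ : divergence ξ ∈ jacobianBrackets f) :
    gradient f ⬝ᵥ ξ ∈ jacobianBrackets f := by
  obtain ⟨η, hη, hηξ⟩ := mem_jacobianBrackets_iff.1 hξ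
  obtain ⟨θ, hθ, rfl⟩ := exists_rowDivergence_eq hη
  refine mem_jacobianBrackets_iff.2 ⟨ξ + θ *ᵥ gradient f, ?_, ?_⟩
  · rw [map_add, divergence_mulVec_gradient hθ, hηξ, add_neg_cancel]
  · rw [dotProduct_add, dotProduct_mulVec_self_of_skew hθ, add_zero]

theorem divergence_mem_jacobianBrackets
    [Module.Finite K (MvPolynomial ι K ⧸ Ideal.span (Set.range (gradient f)))]
    (hξ : gradient f ⬝ᵥ ξ ∈ jacobianBrackets f) : divergence ξ ∈ jacobianBrackets f := by
  obtain ⟨η, hη, hηξ⟩ := mem_jacobianBrackets_iff.1 hξ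
  obtain ⟨θ, hθ, hθξ⟩ := exists_skew_mulVec_eq_of_finite (F := gradient f) (ξ := ξ - η)
    (by rw [dotProduct_sub, hηξ, sub_self])
  have := congrArg divergence hθξ
  rw [divergence_mulVec_gradient hθ, map_sub, hη, sub_zero] at this
  rw [← this]
  exact neg_mem (gradient_dotProduct_rowDivergence_mem_jacobianBrackets hθ)

omit [Fintype ι] in
theorem mul_mem_jacobianBrackets [Finite ι] (hp : p ∈ jacobianBrackets f) :
    f * p ∈ jacobianBrackets f := by
  cases nonempty_fintype ι
  obtain ⟨η, hη, rfl⟩ := mem_jacobianBrackets_iff.1 hp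
  rw [← smul_eq_mul, ← dotProduct_smul]
  refine gradient_dotProduct_mem_jacobianBrackets ?_
  rwa [divergence_smul, hη, mul_zero, zero_add]

end JacobianBrackets

section LeadingForm

open Matrix

section CommRing

variable {R ι : Type*} [CommRing R] [Fintype ι] {w : ι → ℤ} {d m : ℤ}
  {f g p : MvPolynomial ι R} {ξ : ι → MvPolynomial ι R}

theorem gradient_dotProduct_mem_weightLE (hf : f ∈ weightLE w d) (hξ : ξ ∈ vectorWeightLE w m) :
    gradient f ⬝ᵥ ξ ∈ weightLE w (m + d) := by
  refine sum_mem fun i _ => ?_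
  have := mul_mem_weightLE (pderiv_mem_weightLE hf i) (mem_vectorWeightLE_iff.1 hξ i)
  rwa [show d - w i + (m + w i) = m + d by ring] at this

theorem divergence_mem_weightLE (hξ : ξ ∈ vectorWeightLE w m) :
    divergence ξ ∈ weightLE w m := by
  rw [divergence_apply]
  refine sum_mem fun i _ => ?_
  simpa using pderiv_mem_weightLE (mem_vectorWeightLE_iff.1 hξ i) i

theorem weightedHomogeneousComponent_gradient_dotProduct (hg : IsWeightedHomogeneous w g d)
    (m : ℤ) (ξ : ι → MvPolynomial ι R) :
    weightedHomogeneousComponent w (m + d) (gradient g ⬝ᵥ ξ) =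
      gradient g ⬝ᵥ vectorComponent w m ξ := by
  rw [dotProduct, map_sum]
  refine Finset.sum_congr rfl fun i _ => ?_
  rw [show m + d = d - w i + (m + w i) by ring]
  exact weightedHomogeneousComponent_mul (hg.pderiv (sub_add_cancel d (w i))) _ _

variable (hf : f ∈ weightLE w d) (hg : g = weightedHomogeneousComponent w d f)
include hf hg

theorem weightedHomogeneousComponent_gradient_dotProduct_of_mem (hξ : ξ ∈ vectorWeightLE w m) :
    weightedHomogeneousComponent w (m + d) (gradient f ⬝ᵥ ξ) =
      gradient g ⬝ᵥ vectorComponent w m ξ := by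
  have lower : gradient (f - g) ⬝ᵥ ξ ∈ weightLE w (m + (d - 1)) :=
    gradient_dotProduct_mem_weightLE (hg ▸ sub_weightedHomogeneousComponent_mem_weightLE hf) hξ
  have split : gradient f ⬝ᵥ ξ = gradient g ⬝ᵥ ξ + gradient (f - g) ⬝ᵥ ξ := by
    rw [gradient_sub, sub_dotProduct, add_sub_cancel]
  rw [split, map_add, weightedHomogeneousComponent_gradient_dotProduct
      (hg ▸ weightedHomogeneousComponent_isWeightedHomogeneous d f),
    weightedHomogeneousComponent_eq_zero_of_mem_weightLE lower (by omega), add_zero]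

end CommRing

variable {K ι κ : Type*} [Field K] [CharZero K] [Fintype ι] {w : ι → ℤ} {d m : ℤ}
  {f g p : MvPolynomial ι K} {ξ : ι → MvPolynomial ι K}

omit [CharZero K] in
theorem exists_weightedHomogeneous_skew_mulVec_eq (hg : IsWeightedHomogeneous w g d)
    [Module.Finite K (MvPolynomial ι K ⧸ Ideal.span (Set.range (gradient g)))]
    (hξ : gradient g ⬝ᵥ vectorComponent w m ξ = 0) :
    ∃ θ : Matrix ι ι (MvPolynomial ι K), θᵀ = -θ ∧ θ *ᵥ gradient g = vectorComponent w m ξ ∧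
      ∀ i j, IsWeightedHomogeneous w (θ i j) (m - d + w i + w j) := by
  obtain ⟨θ, hθ, hθξ⟩ := exists_skew_mulVec_eq_of_finite (F := gradient g) hξ
  refine ⟨of fun i j => weightedHomogeneousComponent w (m - d + w i + w j) (θ i j), ?_, ?_,
    fun i j => weightedHomogeneousComponent_isWeightedHomogeneous _ _⟩
  · ext1 i j
    rw [transpose_apply, neg_apply, of_apply, of_apply, skew_apply hθ i j, map_neg,
      add_right_comm]
  · funext i
    have expand : vectorComponent w m ξ i = ∑ j, gradient g j * θ i j := by
      rw [← hθξ]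
      exact Finset.sum_congr rfl fun j _ => mul_comm _ _
    rw [← (isWeightedHomogeneous_vectorComponent i).weightedHomogeneousComponent_same, expand,
      map_sum]
    refine Finset.sum_congr rfl fun j _ => ?_
    rw [show m + w i = d - w j + (m - d + w i + w j) by ring, mul_comm]
    exact (weightedHomogeneousComponent_mul (hg.pderiv (sub_add_cancel d (w j))) _ _).symm

theorem mk_sum_smul {R A κ : Type*} [CommRing R] [CommRing A] [Algebra R A] [Fintype κ]
    (I : Ideal A) (c : κ → R) (b : κ → A) :
    Ideal.Quotient.mk I (∑ k, c k • b k) = ∑ k, c k • Ideal.Quotient.mk I (b k) := by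
  simp_rw [← Ideal.Quotient.mkₐ_eq_mk R, map_sum, map_smul]

variable [Finite κ] {b : κ → MvPolynomial ι K} {a : κ → ℤ}

omit [CharZero K] in
theorem exists_sub_gradient_dotProduct_mem_sup (hf : f ∈ weightLE w d)
    (hg : g = weightedHomogeneousComponent w d f) (hb : ∀ k, IsWeightedHomogeneous w (b k) (a k))
    (hspan : Submodule.span K (Set.range
      fun k => Ideal.Quotient.mk (Ideal.span (Set.range (gradient g))) (b k)) = ⊤)
    (hp : p ∈ weightLE w m) : ∃ ξ ∈ vectorWeightLE w (m - d), p - gradient f ⬝ᵥ ξ ∈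
      Submodule.span K (b '' {k | a k = m}) ⊔ weightLE w (m - 1) := by
  cases nonempty_fintype κ
  obtain ⟨c, hc⟩ := (Submodule.mem_span_range_iff_exists_fun K).1
    (hspan ▸ Submodule.mem_top : Ideal.Quotient.mk _ p ∈ _)
  rw [← mk_sum_smul, eq_comm, Ideal.Quotient.eq] at hc
  obtain ⟨ξ, hξ⟩ := Ideal.mem_span_range_iff_exists_fun.1 hc
  set ζ := vectorComponent w (m - d) ξ
  have hζ : ζ ∈ vectorWeightLE w (m - d) := vectorComponent_mem_vectorWeightLE
  have top_eq : gradient g ⬝ᵥ ζ = weightedHomogeneousComponent w m p -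
      weightedHomogeneousComponent w m (∑ k, c k • b k) := by
    rw [← map_sub, ← hξ, ← weightedHomogeneousComponent_gradient_dotProduct
      (hg ▸ weightedHomogeneousComponent_isWeightedHomogeneous d f), sub_add_cancel,
      dotProduct_comm, dotProduct]
  have lower : gradient (f - g) ⬝ᵥ ζ ∈ weightLE w (m - 1) := by
    have := gradient_dotProduct_mem_weightLE
      (hg ▸ sub_weightedHomogeneousComponent_mem_weightLE hf) hζ
    rwa [show m - d + (d - 1) = m - 1 by ring] at this
  have split : gradient f ⬝ᵥ ζ = gradient g ⬝ᵥ ζ + gradient (f - g) ⬝ᵥ ζ := by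
    rw [gradient_sub, sub_dotProduct, add_sub_cancel]
  refine ⟨ζ, hζ, Submodule.mem_sup.2
    ⟨weightedHomogeneousComponent w m (∑ k, c k • b k), ?_, _,
      sub_mem (sub_weightedHomogeneousComponent_mem_weightLE hp) lower, ?_⟩⟩
  · rw [map_sum]
    refine sum_mem fun k _ => ?_
    rw [map_smul]
    refine Submodule.smul_mem _ _ ?_
    obtain hk | hk := eq_or_ne (a k) m
    · rw [← hk, (hb k).weightedHomogeneousComponent_same]
      exact Submodule.subset_span ⟨k, rfl, rfl⟩
    · rw [(hb k).weightedHomogeneousComponent_ne _ hk.symm]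
      exact zero_mem _
  · rw [split, top_eq]
    abel

omit [CharZero K] [Fintype ι] in
theorem finite_quotient_span_gradient [Finite ι] (hw : ∀ i, 0 ≤ w i) (hf : f ∈ weightLE w d)
    (hg : g = weightedHomogeneousComponent w d f) (hb : ∀ k, IsWeightedHomogeneous w (b k) (a k))
    (hspan : Submodule.span K (Set.range
      fun k => Ideal.Quotient.mk (Ideal.span (Set.range (gradient g))) (b k)) = ⊤) :
    Module.Finite K (MvPolynomial ι K ⧸ Ideal.span (Set.range (gradient f))) := by
  cases nonempty_fintype ι
  let mk := (Ideal.Quotient.mkₐ K (Ideal.span (Set.range (gradient f)))).toLinearMap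
  have le_span (n : ℕ) : (weightLE w (n - 1)).map mk ≤ Submodule.span K (Set.range (mk ∘ b)) := by
    induction n with
    | zero => simp [weightLE_eq_bot hw]
    | succ n ih =>
      rintro _ ⟨p, hp, rfl⟩
      obtain ⟨ξ, -, hpξ⟩ := exists_sub_gradient_dotProduct_mem_sup hf hg hb hspan hp
      have mk_eq_zero : mk (gradient f ⬝ᵥ ξ) = 0 := Ideal.Quotient.eq_zero_iff_mem.2 <|
        Ideal.mem_span_range_iff_exists_fun.2 ⟨ξ, dotProduct_comm _ _⟩
      have mem_map := Submodule.mem_map_of_mem (f := mk) hpξ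
      rw [map_sub, mk_eq_zero, sub_zero, Submodule.map_sup] at mem_map
      refine (sup_le ?_ (by simpa using ih) : _ ≤ Submodule.span K (Set.range (mk ∘ b))) mem_map
      rw [Submodule.map_span, Set.range_comp]
      exact Submodule.span_mono (Set.image_mono (Set.image_subset_range _ _))
  suffices h : Submodule.span K (Set.range (mk ∘ b)) = ⊤ from
    ⟨h ▸ Submodule.fg_span (Set.finite_range _)⟩
  refine eq_top_iff.2 fun v _ => ?_
  obtain ⟨p, rfl⟩ := Ideal.Quotient.mk_surjective v
  obtain ⟨n, hn⟩ := exists_mem_weightLE w p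
  exact le_span (n + 1) ⟨p, by simpa using hn, rfl⟩

omit [CharZero K] [Fintype ι] in
theorem degree_pos_of_finite [Nonempty ι] (hw : ∀ i, 0 < w i) (hg : IsWeightedHomogeneous w g d)
    [Module.Finite K (MvPolynomial ι K ⧸ Ideal.span (Set.range (gradient g)))] : 0 < d := by
  by_contra! hd
  have gradient_eq_zero (i : ι) : gradient g i = 0 := by
    have := pderiv_mem_weightLE (mem_weightLE_of_isWeightedHomogeneous hg) i
    rwa [weightLE_eq_bot (fun i => (hw i).le) (by linarith [hw i])] at this
  have hbot : Ideal.span (Set.range (gradient g)) = ⊥ := by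
    simpa [Ideal.span_eq_bot] using gradient_eq_zero
  have : Module.Finite K (MvPolynomial ι K) := Module.Finite.equiv
    ((Ideal.quotientEquivAlgOfEq K hbot).trans (AlgEquiv.quotientBot K _)).toLinearEquiv
  have := Module.Finite.finite_basis (basisMonomials ι K)
  exact not_finite (ι →₀ ℕ)

section Filtered

variable (hf : f ∈ weightLE w d) (hg : g = weightedHomogeneousComponent w d f)
  [Module.Finite K (MvPolynomial ι K ⧸ Ideal.span (Set.range (gradient g)))]
include hf hg

theorem exists_mem_vectorWeightLE_of_mem_succ (hξ : ξ ∈ vectorWeightLE w (m + 1))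
    (hfξ : gradient f ⬝ᵥ ξ ∈ weightLE w (m + d)) :
    ∃ ξ' ∈ vectorWeightLE w m, gradient f ⬝ᵥ ξ' = gradient f ⬝ᵥ ξ := by
  obtain ⟨θ, hθ, hθξ, hθw⟩ := exists_weightedHomogeneous_skew_mulVec_eq (ξ := ξ) (m := m + 1)
    (hg ▸ weightedHomogeneousComponent_isWeightedHomogeneous d f : IsWeightedHomogeneous w g d)
    (by
      rw [← weightedHomogeneousComponent_gradient_dotProduct_of_mem hf hg hξ]
      exact weightedHomogeneousComponent_eq_zero_of_mem_weightLE hfξ (by omega))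
  refine ⟨ξ - θ *ᵥ gradient f, ?_, ?_⟩
  · have split : ξ - θ *ᵥ gradient f =
        ξ - vectorComponent w (m + 1) ξ - θ *ᵥ gradient (f - g) := by
      rw [gradient_sub, mulVec_sub, hθξ]
      abel
    rw [split]
    refine sub_mem (by simpa using sub_vectorComponent_mem_vectorWeightLE hξ)
      (mem_vectorWeightLE_iff.2 fun i => sum_mem fun j _ => ?_)
    have := mul_mem_weightLE (mem_weightLE_of_isWeightedHomogeneous (hθw i j))
      (pderiv_mem_weightLE (hg ▸ sub_weightedHomogeneousComponent_mem_weightLE hf) j)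
    rwa [show m + 1 - d + w i + w j + (d - 1 - w j) = m + w i by ring] at this
  · rw [dotProduct_sub, dotProduct_mulVec_self_of_skew hθ, sub_zero]

theorem exists_mem_vectorWeightLE_gradient_dotProduct_eq (hw : ∀ i, 0 ≤ w i)
    (hfξ : gradient f ⬝ᵥ ξ ∈ weightLE w (m + d)) :
    ∃ ξ' ∈ vectorWeightLE w m, gradient f ⬝ᵥ ξ' = gradient f ⬝ᵥ ξ := by
  obtain ⟨k, hk⟩ := exists_mem_vectorWeightLE hw m ξ
  induction k generalizing ξ with
  | zero => exact ⟨ξ, by simpa using hk, rfl⟩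
  | succ k ih =>
    have hmk : m + d ≤ m + k + d := by omega
    obtain ⟨ξ', hξ', hξξ'⟩ := exists_mem_vectorWeightLE_of_mem_succ hf hg (m := m + k) (ξ := ξ)
      (by simpa [add_assoc] using hk) (weightLE_mono hmk hfξ)
    rw [← hξξ'] at hfξ ⊢
    exact ih hfξ hξ'

omit [Fintype ι] in
theorem weightedHomogeneousComponent_mem_span_gradient [Finite ι] (hw : ∀ i, 0 ≤ w i)
    (hp : p ∈ Ideal.span (Set.range (gradient f))) (hpm : p ∈ weightLE w m) :
    weightedHomogeneousComponent w m p ∈ Ideal.span (Set.range (gradient g)) := by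
  cases nonempty_fintype ι
  obtain ⟨ξ, hξ⟩ := Ideal.mem_span_range_iff_exists_fun.1 hp
  obtain rfl : gradient f ⬝ᵥ ξ = p := dotProduct_comm _ _ |>.trans hξ
  obtain ⟨ξ', hξ', h⟩ := exists_mem_vectorWeightLE_gradient_dotProduct_eq hf hg hw (m := m - d)
    (ξ := ξ) (by rwa [sub_add_cancel])
  have := weightedHomogeneousComponent_gradient_dotProduct_of_mem hf hg hξ'
  rw [sub_add_cancel, h, dotProduct_comm (gradient g)] at this
  exact Ideal.mem_span_range_iff_exists_fun.2 ⟨_, this.symm⟩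

end Filtered

end LeadingForm

section FilteredModule

variable {K H κ : Type*} [Field K] [AddCommGroup H] [Module K H]

theorem aeval_apply_of_semiconj {H' : Type*} [AddCommGroup H'] [Module K H'] {T : Module.End K H}
    {T' : Module.End K H'} {φ : H →ₗ[K] H'} (h : ∀ v, φ (T v) = T' (φ v)) (c : Polynomial K)
    (v : H) : φ (Polynomial.aeval T c v) = Polynomial.aeval T' c (φ v) := by
  induction c using Polynomial.induction_on' with
  | add p q hp hq => simp [hp, hq]
  | monomial k a =>
    have pow_apply : φ ((T ^ k) v) = (T' ^ k) (φ v) := by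
      induction k with
      | zero => simp
      | succ k ih => rw [pow_succ', pow_succ', Module.End.mul_apply, h, ih, Module.End.mul_apply]
    simp [Polynomial.aeval_monomial, pow_apply]

variable [Fintype κ]

/-- The combination `∑ k, c k • x k` in `H` seen as a `K[X]`-module on which `X` acts as `T`. -/
noncomputable def polynomialCombination (T : Module.End K H) (x : κ → H) :
    (κ → Polynomial K) →ₗ[K] H :=
  ∑ k, LinearMap.applyₗ (x k) ∘ₗ (Polynomial.aeval T).toLinearMap ∘ₗ LinearMap.proj k

variable {U σ : Module.End K H} {x : κ → H}

theorem polynomialCombination_apply (T : Module.End K H) (x : κ → H) (c : κ → Polynomial K) :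
    polynomialCombination T x c = ∑ k, Polynomial.aeval T (c k) (x k) := by
  simp [polynomialCombination]

theorem polynomialCombination_C (T : Module.End K H) (x : κ → H) (b : κ → K) :
    polynomialCombination T x (fun k => .C (b k)) = ∑ k, b k • x k := by
  simp [polynomialCombination_apply, Module.algebraMap_end_apply]

theorem polynomialCombination_mul_X (T : Module.End K H) (x : κ → H) (c : κ → Polynomial K) :
    polynomialCombination T x (fun k => c k * .X) = T (polynomialCombination T x c) := by
  simp only [polynomialCombination_apply, map_sum]
  refine Finset.sum_congr rfl fun k _ => ?_
  rw [mul_comm, map_mul, Polynomial.aeval_X, Module.End.mul_apply]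

theorem polynomialCombination_injective (hU : Function.Injective U)
    (hx : ∀ b : κ → K, ∑ k, b k • x k ∈ LinearMap.range U → b = 0) :
    Function.Injective (polynomialCombination U x) := by
  have coeff_zero_and_divX (c : κ → Polynomial K) (hc : polynomialCombination U x c = 0) :
      (fun k => (c k).coeff 0) = 0 ∧ (polynomialCombination U x fun k => (c k).divX) = 0 := by
    have split : ∑ k, (c k).coeff 0 • x k + U (polynomialCombination U x fun k => (c k).divX) =
        0 := by
      rw [← hc, ← polynomialCombination_C, ← polynomialCombination_mul_X, ← map_add]
      congr 1
      ext1 k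
      rw [Pi.add_apply, add_comm, Polynomial.divX_mul_X_add]
    have coeff_zero : (fun k => (c k).coeff 0) = 0 :=
      hx _ (by rw [eq_neg_of_add_eq_zero_left split]; exact neg_mem ⟨_, rfl⟩)
    exact ⟨coeff_zero, hU (by simpa [congr_fun coeff_zero] using split)⟩
  have coeff_eq_zero (i : ℕ) : ∀ c : κ → Polynomial K, polynomialCombination U x c = 0 →
      (fun k => (c k).coeff i) = 0 := by
    induction i with
    | zero => exact fun c hc => (coeff_zero_and_divX c hc).1
    | succ i ih =>
      intro c hc
      simpa only [Polynomial.coeff_divX] using ih _ (coeff_zero_and_divX c hc).2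
  exact (injective_iff_map_eq_zero _).2 fun c hc =>
    funext fun k => Polynomial.ext fun i => congr_fun (coeff_eq_zero i c hc) k

section Filtration

variable {F : ℤ → Submodule K H} {γ : ℤ → K} {a : κ → ℤ} {d m : ℤ} {v : H}
  (hmono : Monotone F) (hbot : ∀ m < 0, F m = ⊥) (hexhaust : ∀ v, ∃ n : ℕ, v ∈ F n)
  (hγ : ∀ m, 0 ≤ m → γ m ≠ 0) (hU : ∀ m, ∀ v ∈ F m, U v - γ m • σ v ∈ F (m + d - 1))

include hbot hexhaust hγ hU

theorem polynomialCombination_surjective (hd : 0 < d)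
    (hspan : ∀ m, F m ≤ Submodule.span K (Set.range x) ⊔ (F (m - d)).map σ ⊔ F (m - 1)) :
    Function.Surjective (polynomialCombination U x) := by
  suffices ∀ n : ℕ, ∀ m < (n : ℤ), F m ≤ LinearMap.range (polynomialCombination U x) from
    fun v => by
      obtain ⟨n, hn⟩ := hexhaust v
      exact this (n + 1) n (by omega) hn
  have span_le : Submodule.span K (Set.range x) ≤ LinearMap.range (polynomialCombination U x) :=
    fun v hv => by
      obtain ⟨b, rfl⟩ := (Submodule.mem_span_range_iff_exists_fun K).1 hv
      exact ⟨_, polynomialCombination_C U x b⟩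
  intro n
  induction n with
  | zero => exact fun m hm => hbot m hm ▸ bot_le
  | succ n ih =>
    intro m hm
    push_cast at hm
    refine (hspan m).trans (sup_le (sup_le span_le ?_) (ih _ (by omega)))
    rintro _ ⟨v, hv, rfl⟩
    obtain hneg | hnonneg := lt_or_ge (m - d) 0
    · rw [hbot _ hneg] at hv
      simp [(Submodule.mem_bot K).1 hv]
    · refine (Submodule.smul_mem_iff _ (hγ _ hnonneg)).1 ?_
      rw [← sub_sub_cancel (U v) (γ _ • σ v)]
      have lower := hU _ v hv
      rw [sub_add_cancel] at lower
      refine sub_mem ?_ (ih (m - 1) (by omega) lower)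
      obtain ⟨c, rfl⟩ := ih (m - d) (by omega) hv
      exact ⟨_, polynomialCombination_mul_X U x c⟩

include hmono

theorem mem_of_apply_mem_of_sub_smul_mem (hσ : ∀ m v, σ v ∈ F (m + d) → v ∈ F m)
    (hv : U v ∈ F (m + d)) : v ∈ F m := by
  obtain ⟨n, hn⟩ : ∃ n : ℕ, v ∈ F (m + n) := by
    obtain ⟨n, hn⟩ := hexhaust v
    exact ⟨(n - m).toNat, hmono (by omega) hn⟩
  induction n with
  | zero => simpa using hn
  | succ n ih =>
    refine ih ?_
    push_cast at hn
    obtain hneg | hnonneg := lt_or_ge (m + (n + 1)) 0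
    · rw [hbot _ hneg, Submodule.mem_bot] at hn
      exact hn ▸ zero_mem _
    · refine hσ _ _ (((F _).smul_mem_iff (hγ _ hnonneg)).1 ?_)
      rw [← sub_sub_cancel (U v) (γ _ • σ v)]
      exact sub_mem (hmono (by omega) hv) (hmono (by omega) (hU _ v hn))

theorem injective_of_sub_smul_mem (hσ : ∀ m v, σ v ∈ F (m + d) → v ∈ F m) :
    Function.Injective U := by
  refine (injective_iff_map_eq_zero _).2 fun v hv => ?_
  have : v ∈ F (-1) :=
    mem_of_apply_mem_of_sub_smul_mem hmono hbot hexhaust hγ hU hσ (hv ▸ zero_mem _)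
  rwa [hbot _ (by decide), Submodule.mem_bot] at this

theorem eq_zero_of_sum_smul_mem_range (hσ : ∀ m v, σ v ∈ F (m + d) → v ∈ F m)
    (hx : ∀ k, x k ∈ F (a k))
    (hindep : ∀ m (b : κ → K), (∀ k, b k ≠ 0 → a k = m) →
      ∑ k, b k • x k ∈ LinearMap.range σ ⊔ F (m - 1) → b = 0)
    (b : κ → K) (hb : ∑ k, b k • x k ∈ LinearMap.range U) : b = 0 := by
  classical
  obtain ⟨v, hv⟩ := hb
  by_contra hb0
  obtain ⟨l, hl, hmax⟩ := Finset.exists_max_image {k | b k ≠ 0} a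
    (by simpa [Finset.filter_nonempty_iff, funext_iff] using hb0)
  simp only [Finset.mem_filter_univ] at hl hmax
  have hbF : ∑ k, b k • x k ∈ F (a l) := sum_mem fun k _ => by
    by_cases hk : b k = 0
    · simp [hk]
    · exact Submodule.smul_mem _ _ (hmono (hmax k hk) (hx k))
  have hvF : v ∈ F (a l - d) := mem_of_apply_mem_of_sub_smul_mem hmono hbot hexhaust hγ hU hσ
    (by rwa [hv, sub_add_cancel])
  let top (k : κ) : K := if a k = a l then b k else 0
  have lower : ∑ k, b k • x k - ∑ k, top k • x k ∈ F (a l - 1) := by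
    rw [← Finset.sum_sub_distrib]
    refine sum_mem fun k _ => ?_
    rw [← sub_smul]
    by_cases hk : b k = 0 ∨ a k = a l
    · obtain hk | hk := hk <;> simp [top, hk]
    · push Not at hk
      exact Submodule.smul_mem _ _ (hmono (by have := hmax k hk.1; omega) (hx k))
  have htop : top = 0 := hindep (a l) top (fun k hk => of_not_not fun h => hk (if_neg h)) <|
    Submodule.mem_sup.2 ⟨γ (a l - d) • σ v, Submodule.smul_mem _ _ ⟨v, rfl⟩, _,
      sub_mem (sub_add_cancel (a l) d ▸ hU _ v hvF) lower, by rw [hv]; abel⟩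
  exact hl (by simpa [top] using congr_fun htop l)

end Filtration

end FilteredModule

section BrieskornModule

open Matrix

/-- The classes of the polynomials of weight at most `m` in `R[x] ⧸ jacobianBrackets f`. -/
noncomputable def classWeightLE {R ι : Type*} [CommRing R] (w : ι → ℤ)
    (f : MvPolynomial ι R) (m : ℤ) :
    Submodule R (MvPolynomial ι R ⧸ jacobianBrackets f) :=
  (weightLE w m).map (jacobianBrackets f).mkQ

theorem mkQ_mem_classWeightLE {R ι : Type*} [CommRing R] {w : ι → ℤ} {p : MvPolynomial ι R}
    {m : ℤ} (f : MvPolynomial ι R) (hp : p ∈ weightLE w m) :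
    (jacobianBrackets f).mkQ p ∈ classWeightLE w f m :=
  Submodule.mem_map_of_mem hp

theorem classWeightLE_mono {R ι : Type*} [CommRing R] (w : ι → ℤ) (f : MvPolynomial ι R) :
    Monotone (classWeightLE w f) :=
  fun _ _ h => Submodule.map_mono (weightLE_mono h)

theorem classWeightLE_eq_bot {R ι : Type*} [CommRing R] {w : ι → ℤ} {m : ℤ} (hw : ∀ i, 0 ≤ w i)
    (f : MvPolynomial ι R) (hm : m < 0) : classWeightLE w f m = ⊥ := by
  rw [classWeightLE, weightLE_eq_bot hw hm, Submodule.map_bot]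

theorem exists_mem_classWeightLE {R ι : Type*} [CommRing R] {f : MvPolynomial ι R} (w : ι → ℤ)
    (v : MvPolynomial ι R ⧸ jacobianBrackets f) : ∃ n : ℕ, v ∈ classWeightLE w f n := by
  obtain ⟨p, rfl⟩ := (jacobianBrackets f).mkQ_surjective v
  obtain ⟨n, hn⟩ := exists_mem_weightLE w p
  exact ⟨n, mkQ_mem_classWeightLE f hn⟩

variable {K ι κ : Type*} [Field K] [CharZero K] [Fintype ι] [Nontrivial ι]
  {f g p : MvPolynomial ι K} {w : ι → ℤ} {α : ι → ℕ} {d m : ℤ}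

/-- Multiplication by `f` on `K[x] ⧸ jacobianBrackets f`, i.e. multiplication by `t` on the
Brieskorn lattice `Ωⁿ⁺¹ / df ∧ dΩⁿ⁻¹`. -/
noncomputable def mulSelf (f : MvPolynomial ι K) :
    Module.End K (MvPolynomial ι K ⧸ jacobianBrackets f) :=
  (jacobianBrackets f).mapQ _ (LinearMap.mulLeft K f) fun _ => mul_mem_jacobianBrackets

/-- The operator `dη ↦ df ∧ η` on `K[x] ⧸ jacobianBrackets f`: the inverse of the Gauss-Manin
connection. -/
noncomputable def inverseGaussManin (f : MvPolynomial ι K) :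
    Module.End K (MvPolynomial ι K ⧸ jacobianBrackets f) :=
  (jacobianBrackets f).mapQ _ (dotProductBilin K K (gradient f) ∘ₗ divergenceSection) fun p hp =>
    gradient_dotProduct_mem_jacobianBrackets (by rwa [divergence_divergenceSection])

theorem inverseGaussManin_mkQ_divergence (f : MvPolynomial ι K) (ξ : ι → MvPolynomial ι K) :
    inverseGaussManin f ((jacobianBrackets f).mkQ (divergence ξ)) =
      (jacobianBrackets f).mkQ (gradient f ⬝ᵥ ξ) := by
  refine (Submodule.Quotient.eq _).2 ?_
  have : gradient f ⬝ᵥ (divergenceSection (divergence ξ) - ξ) ∈ jacobianBrackets f :=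
    gradient_dotProduct_mem_jacobianBrackets (by simp [divergence_divergenceSection])
  rwa [dotProduct_sub] at this

theorem mulSelf_mkQ (f p : MvPolynomial ι K) :
    mulSelf f ((jacobianBrackets f).mkQ p) = (jacobianBrackets f).mkQ (f * p) :=
  rfl

theorem aeval_mulSelf_mkQ (f p : MvPolynomial ι K) (c : Polynomial K) :
    Polynomial.aeval (mulSelf f) c ((jacobianBrackets f).mkQ p) =
      (jacobianBrackets f).mkQ (Polynomial.aeval f c * p) := by
  rw [← aeval_apply_of_semiconj (T := Algebra.lmul K _ f) fun q => (mulSelf_mkQ f q).symm,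
    Polynomial.aeval_algHom_apply]
  rfl

theorem mulSelf_inverseGaussManin (f : MvPolynomial ι K)
    (v : MvPolynomial ι K ⧸ jacobianBrackets f) : mulSelf f (inverseGaussManin f v) =
      inverseGaussManin f ((mulSelf f + inverseGaussManin f) v) := by
  obtain ⟨p, rfl⟩ := (jacobianBrackets f).mkQ_surjective v
  obtain ⟨ξ, rfl⟩ := divergence_surjective p
  rw [LinearMap.add_apply, inverseGaussManin_mkQ_divergence, mulSelf_mkQ, mulSelf_mkQ, ← map_add,
    ← divergence_smul, inverseGaussManin_mkQ_divergence, dotProduct_smul, smul_eq_mul]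

theorem range_inverseGaussManin (f : MvPolynomial ι K) :
    LinearMap.range (inverseGaussManin f) = ((Ideal.span (Set.range (gradient f))).restrictScalars
      K).map (jacobianBrackets f).mkQ := by
  ext v
  constructor
  · rintro ⟨u, rfl⟩
    obtain ⟨p, rfl⟩ := (jacobianBrackets f).mkQ_surjective u
    obtain ⟨ξ, rfl⟩ := divergence_surjective p
    exact ⟨gradient f ⬝ᵥ ξ, Ideal.mem_span_range_iff_exists_fun.2 ⟨ξ, dotProduct_comm _ _⟩,
      (inverseGaussManin_mkQ_divergence f ξ).symm⟩
  · rintro ⟨p, hp, rfl⟩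
    obtain ⟨ξ, rfl⟩ := Ideal.mem_span_range_iff_exists_fun.1 hp
    exact ⟨_, (inverseGaussManin_mkQ_divergence f ξ).trans (by rw [dotProduct_comm, dotProduct])⟩

variable {v : MvPolynomial ι K ⧸ jacobianBrackets f}

theorem inverseGaussManin_mem_classWeightLE (hf : f ∈ weightLE w d)
    (hv : v ∈ classWeightLE w f m) : inverseGaussManin f v ∈ classWeightLE w f (m + d) := by
  obtain ⟨p, hp, rfl⟩ := hv
  obtain ⟨ξ, hξ, rfl⟩ := weightLE_le_map_divergence w m hp
  rw [inverseGaussManin_mkQ_divergence]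
  exact mkQ_mem_classWeightLE f (gradient_dotProduct_mem_weightLE hf hξ)

theorem mulSelf_sub_smul_inverseGaussManin_mem (hd : d ≠ 0)
    (hf : f ∈ weightLE (fun i => (α i : ℤ)) d) (hv : v ∈ classWeightLE (fun i => (α i : ℤ)) f m) :
    mulSelf f v - ((∑ i, α i + m) / d : K) • inverseGaussManin f v ∈
      classWeightLE (fun i => (α i : ℤ)) f (m + d - 1) := by
  obtain ⟨p, hp, rfl⟩ := hv
  let euler : ι → MvPolynomial ι K := eulerField α
  let s : MvPolynomial ι K := gradient f ⬝ᵥ euler - d • f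
  let r : MvPolynomial ι K := gradient p ⬝ᵥ euler - m • p
  have hs : s ∈ weightLE (fun i => (α i : ℤ)) (d - 1) :=
    gradient_dotProduct_eulerField_sub_mem_weightLE hf
  have hr : r ∈ weightLE (fun i => (α i : ℤ)) (m - 1) :=
    gradient_dotProduct_eulerField_sub_mem_weightLE hp
  have divergence_eq : divergence (p • euler) = (∑ i, α i + m : K) • p + r := by
    rw [divergence_smul, divergence_eulerField, add_smul, add_assoc]
    simp [r, mul_comm, Algebra.smul_def]
  have gradient_eq : gradient f ⬝ᵥ (p • euler) = (d : K) • (f * p) + p * s := by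
    rw [dotProduct_smul, Int.cast_smul_eq_zsmul]
    simp only [s, zsmul_eq_mul, smul_eq_mul]
    ring
  have hd' : (d : K) ≠ 0 := Int.cast_ne_zero.2 hd
  have smul_eq : (d : K) • (mulSelf f ((jacobianBrackets f).mkQ p) -
      ((∑ i, α i + m) / d : K) • inverseGaussManin f ((jacobianBrackets f).mkQ p)) =
      inverseGaussManin f ((jacobianBrackets f).mkQ r) - (jacobianBrackets f).mkQ (p * s) := by
    have := inverseGaussManin_mkQ_divergence f (p • euler)
    rw [divergence_eq, gradient_eq] at this
    simp only [map_add, map_smul] at this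
    rw [smul_sub, smul_smul, mul_div_cancel₀ _ hd', mulSelf_mkQ, sub_eq_sub_iff_add_eq_add,
      ← this, add_comm]
  refine (Submodule.smul_mem_iff _ hd').1 (smul_eq ▸ sub_mem ?_ ?_)
  · have := inverseGaussManin_mem_classWeightLE hf (mkQ_mem_classWeightLE f hr)
    rwa [sub_add_eq_add_sub] at this
  · rw [add_sub_assoc]
    exact mkQ_mem_classWeightLE f (mul_mem_weightLE hp hs)

theorem mem_of_inverseGaussManin_mem_classWeightLE (hw : ∀ i, 0 ≤ w i) (hf : f ∈ weightLE w d)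
    (hg : g = weightedHomogeneousComponent w d f)
    [Module.Finite K (MvPolynomial ι K ⧸ Ideal.span (Set.range (gradient f)))]
    [Module.Finite K (MvPolynomial ι K ⧸ Ideal.span (Set.range (gradient g)))]
    (hv : inverseGaussManin f v ∈ classWeightLE w f (m + d)) : v ∈ classWeightLE w f m := by
  obtain ⟨p, rfl⟩ := (jacobianBrackets f).mkQ_surjective v
  obtain ⟨ξ, rfl⟩ := divergence_surjective p
  rw [inverseGaussManin_mkQ_divergence] at hv
  obtain ⟨q, hq, hqξ⟩ := hv
  have hqξ_mem : q - gradient f ⬝ᵥ ξ ∈ jacobianBrackets f := (Submodule.Quotient.eq _).1 hqξ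
  obtain ⟨η, -, hη⟩ := mem_jacobianBrackets_iff.1 hqξ_mem
  obtain ⟨ξ', hξ', hξξ'⟩ := exists_mem_vectorWeightLE_gradient_dotProduct_eq hf hg hw
    (ξ := ξ + η) (m := m) (by rwa [dotProduct_add, hη, add_sub_cancel])
  have same_class : divergence (ξ' - ξ) ∈ jacobianBrackets f := by
    apply divergence_mem_jacobianBrackets
    rwa [dotProduct_sub, hξξ', dotProduct_add, add_sub_cancel_left, hη]
  rw [map_sub] at same_class
  exact ⟨divergence ξ', divergence_mem_weightLE hξ', (Submodule.Quotient.eq _).2 same_class⟩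

theorem inverseGaussManin_injective (hw : ∀ i, 0 ≤ w i) (hf : f ∈ weightLE w d)
    (hg : g = weightedHomogeneousComponent w d f)
    [Module.Finite K (MvPolynomial ι K ⧸ Ideal.span (Set.range (gradient f)))]
    [Module.Finite K (MvPolynomial ι K ⧸ Ideal.span (Set.range (gradient g)))] :
    Function.Injective (inverseGaussManin f) := by
  refine (injective_iff_map_eq_zero _).2 fun v hv => ?_
  have : v ∈ classWeightLE w f (-1) :=
    mem_of_inverseGaussManin_mem_classWeightLE hw hf hg (hv ▸ zero_mem _)
  rwa [classWeightLE_eq_bot hw f (by decide), Submodule.mem_bot] at this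

theorem mkQ_mul_sum_eq_smul_inverseGaussManin (f : MvPolynomial ι K) (D : K)
    (hp : IsWeightedHomogeneous (fun i => (α i : ℤ)) p m) :
    (jacobianBrackets f).mkQ (p * ∑ i, C (α i / D) * X i * pderiv i f) =
      ((∑ i, α i + m) / D : K) • inverseGaussManin f ((jacobianBrackets f).mkQ p) := by
  have gradient_eq : p * ∑ i, C (α i / D) * X i * pderiv i f =
      D⁻¹ • (gradient f ⬝ᵥ (p • eulerField α)) := by
    simp only [dotProduct, gradient, eulerField, Pi.smul_apply, smul_eq_mul, nsmul_eq_mul,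
      Finset.mul_sum, Finset.smul_sum, div_eq_inv_mul, C_mul, smul_eq_C_mul, map_natCast]
    exact Finset.sum_congr rfl fun i _ => by ring
  have divergence_eq : divergence (p • eulerField α) = (∑ i, α i + m : K) • p := by
    rw [divergence_smul_eulerField hp, ← Int.cast_smul_eq_zsmul K]
    push_cast
    rfl
  rw [gradient_eq, map_smul, ← inverseGaussManin_mkQ_divergence, divergence_eq, map_smul, map_smul,
    smul_smul, div_eq_inv_mul]

variable [Fintype κ] {b : κ → MvPolynomial ι K} {a : κ → ℤ}

theorem eq_zero_of_sum_smul_mem_range_inverseGaussManin_sup (hw : ∀ i, 0 ≤ w i)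
    (hf : f ∈ weightLE w d) (hg : g = weightedHomogeneousComponent w d f)
    [Module.Finite K (MvPolynomial ι K ⧸ Ideal.span (Set.range (gradient g)))]
    (hb : ∀ k, IsWeightedHomogeneous w (b k) (a k))
    (hindep : LinearIndependent K
      fun k => Ideal.Quotient.mk (Ideal.span (Set.range (gradient g))) (b k))
    (c : κ → K) (hc : ∀ k, c k ≠ 0 → a k = m) (hmem : ∑ k, c k • (jacobianBrackets f).mkQ (b k) ∈
      LinearMap.range (inverseGaussManin f) ⊔ classWeightLE w f (m - 1)) : c = 0 := by
  obtain ⟨y, hy, z, ⟨q, hq, rfl⟩, hyz⟩ := Submodule.mem_sup.1 hmem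
  rw [range_inverseGaussManin] at hy
  obtain ⟨p, hp, rfl⟩ := hy
  simp only [← map_smul, ← map_sum, ← map_add] at hyz
  have homogeneous : IsWeightedHomogeneous w (∑ k, c k • b k) m :=
    sum_mem (S := weightedHomogeneousSubmodule K w m) fun k _ => by
      by_cases hk : c k = 0
      · simp [hk]
      · exact Submodule.smul_mem _ _ (hc k hk ▸ hb k)
  have hJ := jacobianBrackets_le f ((Submodule.Quotient.eq _).1 hyz.symm)
  have hq_mem : ∑ k, c k • b k - q ∈ Ideal.span (Set.range (gradient f)) := by
    rw [show ∑ k, c k • b k - q = ∑ k, c k • b k - (p + q) + p by abel]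
    exact add_mem hJ hp
  have htop := weightedHomogeneousComponent_mem_span_gradient hf hg hw hq_mem
    (sub_mem (mem_weightLE_of_isWeightedHomogeneous homogeneous) (weightLE_mono (by omega) hq))
  rw [map_sub, homogeneous.weightedHomogeneousComponent_same,
    weightedHomogeneousComponent_eq_zero_of_mem_weightLE hq (by omega), sub_zero,
    ← Ideal.Quotient.eq_zero_iff_mem, mk_sum_smul] at htop
  exact funext (Fintype.linearIndependent_iff.1 hindep c htop)

omit [Fintype κ] in
theorem classWeightLE_le_sup [Finite κ] (hf : f ∈ weightLE w d)
    (hg : g = weightedHomogeneousComponent w d f) (hb : ∀ k, IsWeightedHomogeneous w (b k) (a k))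
    (hspan : Submodule.span K (Set.range
      fun k => Ideal.Quotient.mk (Ideal.span (Set.range (gradient g))) (b k)) = ⊤) :
    classWeightLE w f m ≤ Submodule.span K (Set.range fun k => (jacobianBrackets f).mkQ (b k)) ⊔
      (classWeightLE w f (m - d)).map (inverseGaussManin f) ⊔ classWeightLE w f (m - 1) := by
  rintro _ ⟨p, hp, rfl⟩
  obtain ⟨ξ, hξ, hpξ⟩ := exists_sub_gradient_dotProduct_mem_sup hf hg hb hspan hp
  obtain ⟨q, hq, r, hr, hqr⟩ := Submodule.mem_sup.1 hpξ
  rw [← sub_add_cancel p (gradient f ⬝ᵥ ξ), ← hqr, map_add, map_add, add_right_comm,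
    ← inverseGaussManin_mkQ_divergence]
  refine Submodule.add_mem_sup (Submodule.add_mem_sup ?_ (Submodule.mem_map_of_mem
    (mkQ_mem_classWeightLE f (divergence_mem_weightLE hξ)))) (mkQ_mem_classWeightLE f hr)
  have := Submodule.mem_map_of_mem (f := (jacobianBrackets f).mkQ) hq
  rw [Submodule.map_span, Set.image_image] at this
  exact Submodule.span_mono (Set.image_subset_range _ _) this

theorem bijective_polynomialCombination_mkQ (hα : ∀ i, 0 < α i)
    (hf : f ∈ weightLE (fun i => (α i : ℤ)) d)
    (hg : g = weightedHomogeneousComponent (fun i => (α i : ℤ)) d f)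
    [Module.Finite K (MvPolynomial ι K ⧸ Ideal.span (Set.range (gradient f)))]
    (hb : ∀ k, IsWeightedHomogeneous (fun i => (α i : ℤ)) (b k) (a k))
    (hindep : LinearIndependent K
      fun k => Ideal.Quotient.mk (Ideal.span (Set.range (gradient g))) (b k))
    (hspan : Submodule.span K (Set.range
      fun k => Ideal.Quotient.mk (Ideal.span (Set.range (gradient g))) (b k)) = ⊤) :
    Function.Bijective (polynomialCombination (mulSelf f + inverseGaussManin f)
      fun k => (jacobianBrackets f).mkQ (b k)) := by
  set w := fun i => (α i : ℤ)
  have hw (i : ι) : 0 ≤ w i := Int.natCast_nonneg _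
  have : Module.Finite K (MvPolynomial ι K ⧸ Ideal.span (Set.range (gradient g))) :=
    ⟨hspan ▸ Submodule.fg_span (Set.finite_range _)⟩
  have hd : 0 < d := degree_pos_of_finite (fun i => Int.natCast_pos.2 (hα i))
    (hg ▸ weightedHomogeneousComponent_isWeightedHomogeneous d f)
  let γ (m : ℤ) : K := (∑ i, α i + m) / d + 1
  have hγ (m : ℤ) (hm : 0 ≤ m) : γ m ≠ 0 := by
    have hd' : (d : K) ≠ 0 := Int.cast_ne_zero.2 hd.ne'
    have pos : ∑ i, (α i : ℤ) + m + d ≠ 0 :=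
      (add_pos_of_nonneg_of_pos (add_nonneg (Finset.sum_nonneg fun i _ => hw i) hm) hd).ne'
    refine (div_add_one hd').trans_ne ?_
    exact div_ne_zero (by exact_mod_cast pos) hd'
  have hU (m : ℤ) (v : MvPolynomial ι K ⧸ jacobianBrackets f) (hv : v ∈ classWeightLE w f m) :
      (mulSelf f + inverseGaussManin f) v - γ m • inverseGaussManin f v ∈
        classWeightLE w f (m + d - 1) := by
    rw [LinearMap.add_apply, add_smul, one_smul, add_sub_add_right_eq_sub]
    exact mulSelf_sub_smul_inverseGaussManin_mem hd.ne' hf hv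
  have hmono := classWeightLE_mono w f
  have hbot (m : ℤ) (hm : m < 0) := classWeightLE_eq_bot hw f hm
  have hexhaust := exists_mem_classWeightLE (f := f) w
  have strict (m : ℤ) (v : MvPolynomial ι K ⧸ jacobianBrackets f) :=
    mem_of_inverseGaussManin_mem_classWeightLE (m := m) (v := v) hw hf hg
  have injective : Function.Injective (mulSelf f + inverseGaussManin f) :=
    injective_of_sub_smul_mem hmono hbot hexhaust hγ hU strict
  exact ⟨polynomialCombination_injective injective <|
    eq_zero_of_sum_smul_mem_range hmono hbot hexhaust hγ hU strict
      (fun k => mkQ_mem_classWeightLE f (mem_weightLE_of_isWeightedHomogeneous (hb k)))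
      fun m c => eq_zero_of_sum_smul_mem_range_inverseGaussManin_sup hw hf hg hb hindep c,
    polynomialCombination_surjective hbot hexhaust hγ hU hd
      fun m => classWeightLE_le_sup hf hg hb hspan⟩

theorem sum_mkQ_aeval_mul_eq {e : κ → MvPolynomial ι K} {l : κ → K}
    (he : ∀ k, (jacobianBrackets f).mkQ (e k) =
      l k • inverseGaussManin f ((jacobianBrackets f).mkQ (b k))) (c : κ → Polynomial K) :
    ∑ k, (jacobianBrackets f).mkQ (Polynomial.aeval f (c k) * e k) =
      inverseGaussManin f (polynomialCombination (mulSelf f + inverseGaussManin f)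
        (fun k => (jacobianBrackets f).mkQ (b k)) (fun k => l k • c k)) := by
  rw [polynomialCombination_apply, map_sum]
  refine Finset.sum_congr rfl fun k _ => ?_
  rw [← aeval_mulSelf_mkQ, he, map_smul, map_smul, LinearMap.smul_apply, map_smul,
    aeval_apply_of_semiconj fun v => (mulSelf_inverseGaussManin f v).symm]

end BrieskornModule

end Brieskorn

open Brieskorn in
theorem brieskorn_Hp_free_general {K ι κ : Type*} [Field K] [CharZero K] [Fintype ι]
    [Nontrivial ι] [Fintype κ] {α : ι → ℕ} (hα : ∀ i, 0 < α i) {f g : MvPolynomial ι K} {d : ℕ}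
    (hd : weightedTotalDegree α f = d) (hg : g = weightedHomogeneousComponent α d f)
    {b : κ → MvPolynomial ι K} {m : κ → ℕ} (hb : ∀ k, IsWeightedHomogeneous α (b k) (m k))
    (hindep : LinearIndependent K
      fun k => Ideal.Quotient.mk (Ideal.span (Set.range fun i => pderiv i g)) (b k))
    (hspan : Submodule.span K (Set.range
      fun k => Ideal.Quotient.mk (Ideal.span (Set.range fun i => pderiv i g)) (b k)) = ⊤) :
    jacobianBrackets f ≤ (Ideal.span (Set.range fun i => pderiv i f)).restrictScalars K ∧
    (∀ P ∈ jacobianBrackets f, f * P ∈ jacobianBrackets f) ∧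
    (∀ P ∈ (Ideal.span (Set.range fun i => pderiv i f)).restrictScalars K,
      f * P ∈ (Ideal.span (Set.range fun i => pderiv i f)).restrictScalars K) ∧
    ∀ v ∈ ((Ideal.span (Set.range fun i => pderiv i f)).restrictScalars K).map
        (jacobianBrackets f).mkQ,
      ∃! c : κ → Polynomial K, v = ∑ k, (jacobianBrackets f).mkQ
        (Polynomial.aeval f (c k) * (b k * ∑ i, C ((α i : K) / d) * X i * pderiv i f)) := by
  refine ⟨jacobianBrackets_le f, fun _ => mul_mem_jacobianBrackets,
    fun _ => Ideal.mul_mem_left _ f, fun v hv => ?_⟩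
  have hf : f ∈ weightLE (fun i => (α i : ℤ)) d := fun β hβ => by
    rw [Set.mem_ofPred_eq, weight_natCast, ← hd]
    exact_mod_cast le_weightedTotalDegree α hβ
  rw [← weightedHomogeneousComponent_natCast] at hg
  simp only [← isWeightedHomogeneous_natCast_iff] at hb
  have hw (i : ι) : 0 ≤ (α i : ℤ) := Int.natCast_nonneg _
  have : Module.Finite K (MvPolynomial ι K ⧸ Ideal.span (Set.range (gradient g))) :=
    ⟨hspan ▸ Submodule.fg_span (Set.finite_range _)⟩
  have : Module.Finite K (MvPolynomial ι K ⧸ Ideal.span (Set.range (gradient f))) :=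
    finite_quotient_span_gradient hw hf hg hb hspan
  have hd0 : 0 < (d : ℤ) := degree_pos_of_finite (fun i => Int.natCast_pos.2 (hα i))
    (hg ▸ weightedHomogeneousComponent_isWeightedHomogeneous _ f)
  have factor_ne_zero (k : κ) : (∑ i, α i + (m k : ℤ)) / (d : K) ≠ 0 := by
    have : 0 < ∑ i, α i := Finset.sum_pos (fun i _ => hα i) Finset.univ_nonempty
    have sum_ne_zero : ∑ i, α i + m k ≠ 0 := by omega
    exact div_ne_zero (by exact_mod_cast sum_ne_zero) (by exact_mod_cast hd0.ne')
  obtain ⟨u, rfl⟩ := (range_inverseGaussManin f).ge hv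
  have expansion := ((bijective_polynomialCombination_mkQ hα hf hg hb hindep hspan).comp
    (Function.Bijective.piMap fun k => MulAction.bijective₀ (factor_ne_zero k))).existsUnique u
  refine (existsUnique_congr fun c => ?_).1 expansion
  rw [sum_mkQ_aeval_mul_eq fun k => mkQ_mul_sum_eq_smul_inverseGaussManin f (d : K) (hb k),
    (inverseGaussManin_injective hw hf hg).eq_iff, eq_comm]
  rfl

/-- Let `f` be strongly tame for the weights `α` and of weighted degree
`d`.  Let `J` be the ℂ-span of the polynomials `(∂f/∂xᵢ)(∂h/∂xⱼ) - (∂f/∂xⱼ)(∂h/∂xᵢ)` and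
`J_f = ⟨∂f/∂x₁,…,∂f/∂x_{n+1}⟩` the Jacobian ideal.  Then `J ⊆ J_f`, both are stable under
multiplication by `f`, and the classes of `e_β = x^β·Σᵢ (αᵢ/d)·xᵢ·∂f/∂xᵢ`, `β ∈ I`, form
a basis of `J_f/J` as a free `ℂ[t]`-module, `t` acting as multiplication by `f`: every
class in `J_f/J` has a unique representation `Σ_{β∈I} c_β(f)·e_β` with `c_β ∈ ℂ[t]`.
(This says the forms `η_β` freely generate the Brieskorn module
`H' = (df ∧ Ω^n)/(df ∧ dΩ^{n-1})` over `ℂ[t]`.) -/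
theorem brieskorn_Hp_free
    (n : ℕ) (hn : 1 ≤ n) (α : Fin (n + 1) → ℕ)
    (hαpos : ∀ i, 0 < α i) (hα : Finset.univ.gcd α = 1)
    (f : MvPolynomial (Fin (n + 1)) ℂ) (d : ℕ)
    (hd : MvPolynomial.weightedTotalDegree α f = d)
    (g : MvPolynomial (Fin (n + 1)) ℂ)
    (hg : g = weightedHomogeneousComponent α d f)
    (hg0 : g ≠ 0)
    (htame : ∀ x : Fin (n + 1) → ℂ, (∀ i, eval x (pderiv i g) = 0) → x = 0)
    (I : Finset (Fin (n + 1) →₀ ℕ))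
    (hIindep : LinearIndependent ℂ (fun β : I =>
      Ideal.Quotient.mk (Ideal.span (Set.range fun i => pderiv i g))
        (monomial (β : Fin (n + 1) →₀ ℕ) (1 : ℂ))))
    (hIspan : Submodule.span ℂ (Set.range fun β : I =>
      Ideal.Quotient.mk (Ideal.span (Set.range fun i => pderiv i g))
        (monomial (β : Fin (n + 1) →₀ ℕ) (1 : ℂ))) = ⊤)
    (J : Submodule ℂ (MvPolynomial (Fin (n + 1)) ℂ))
    (hJ : J = Submodule.span ℂ
      {P : MvPolynomial (Fin (n + 1)) ℂ |
        ∃ (h : MvPolynomial (Fin (n + 1)) ℂ) (i j : Fin (n + 1)), i < j ∧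
          P = pderiv i f * pderiv j h - pderiv j f * pderiv i h})
    (Jf : Submodule ℂ (MvPolynomial (Fin (n + 1)) ℂ))
    (hJf : Jf = Submodule.restrictScalars ℂ
      (Ideal.span (Set.range fun i => pderiv i f)))
    (e : (Fin (n + 1) →₀ ℕ) → MvPolynomial (Fin (n + 1)) ℂ)
    (he : ∀ β, e β = monomial β (1 : ℂ) *
      ∑ i, C ((α i : ℂ) / (d : ℂ)) * X i * pderiv i f) :
    J ≤ Jf ∧
    (∀ P ∈ J, f * P ∈ J) ∧
    (∀ P ∈ Jf, f * P ∈ Jf) ∧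
    ∀ v ∈ Jf.map J.mkQ,
      ∃! c : {β // β ∈ I} → Polynomial ℂ,
        v = ∑ β ∈ I.attach, J.mkQ (Polynomial.aeval f (c β) * e (β : Fin (n + 1) →₀ ℕ)) := by
  have := Fin.nontrivial_iff_two_le.2 (Nat.succ_le_succ hn)
  obtain rfl : J = Brieskorn.jacobianBrackets f :=
    hJ.trans (Brieskorn.jacobianBrackets_eq_span_lt f).symm
  subst hJf
  simpa only [he, Finset.univ_eq_attach] using brieskorn_Hp_free_general hαpos hd hg
    (fun β : I => isWeightedHomogeneous_monomial α (β : Fin (n + 1) →₀ ℕ) (1 : ℂ) rfl)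
    hIindep hIspan
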